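/- N_15^{aa}(Π) ≤ 19, N_15^{bb}(Π) ≤ 19 and N_15^{cc}(Π) ≤ 19. -/

import Mathlib

/-- An `n`-half-period: a sequence `π_0, …, π_{n(n-1)/2}` of arrangements of `n`
labeled elements in the positions `1, …, n` (recorded by `pos t x` = the position of
element `x` at time `t`), in which consecutive arrangements differ by a transposition
of the elements in two adjacent positions, and the last arrangement is the reverse of
the first. -/
structure HalfPeriod (n : ℕ) where
  pos : ℕ → Fin n → ℕ
  pos_mem : ∀ t, t ≤ n * (n - 1) / 2 → ∀ x, 1 ≤ pos t x ∧ pos t x ≤ n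
  pos_inj : ∀ t, t ≤ n * (n - 1) / 2 → Function.Injective (pos t)
  step : ∀ t, t < n * (n - 1) / 2 → ∃ x y : Fin n,
    pos t y = pos t x + 1 ∧ pos (t + 1) x = pos t x + 1 ∧ pos (t + 1) y = pos t x ∧
    ∀ z, z ≠ x → z ≠ y → pos (t + 1) z = pos t z
  reverse : ∀ x, pos (n * (n - 1) / 2) x = n + 1 - pos 0 x

namespace HalfPeriod

variable {n : ℕ}

/-- The number of transposition steps of an `n`-half-period. -/
def steps (n : ℕ) : ℕ := n * (n - 1) / 2

/-- Element `x` moves (changes position) at step `t`. -/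
def Moved (hp : HalfPeriod n) (t : ℕ) (x : Fin n) : Prop :=
  hp.pos (t + 1) x ≠ hp.pos t x

/-- Step `t` is the transposition of the (distinct) elements `x` and `y`. -/
def SwapsAt (hp : HalfPeriod n) (t : ℕ) (x y : Fin n) : Prop :=
  x ≠ y ∧ hp.Moved t x ∧ hp.Moved t y

/-- Step `t` is an `i`-transposition: it swaps the elements at positions `i` and `i+1`. -/
def GateAt (hp : HalfPeriod n) (t i : ℕ) : Prop :=
  ∃ x y : Fin n, hp.pos t x = i ∧ hp.pos t y = i + 1 ∧
    hp.pos (t + 1) x = i + 1 ∧ hp.pos (t + 1) y = i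

/-- Step `t` is an `i`-critical transposition: an `i`- or an `(n-i)`-transposition. -/
def Critical (hp : HalfPeriod n) (t i : ℕ) : Prop :=
  hp.GateAt t i ∨ hp.GateAt t (n - i)

/-- Step `t` is a `(≤ k)`-critical transposition. -/
def LeCritical (hp : HalfPeriod n) (t k : ℕ) : Prop :=
  ∃ i, 1 ≤ i ∧ i ≤ k ∧ hp.Critical t i

/-- `N_{≤ k}`: the number of `(≤ k)`-critical transpositions of the half-period. -/
noncomputable def NLe (hp : HalfPeriod n) (k : ℕ) : ℕ :=
  {t : ℕ | t < steps n ∧ hp.LeCritical t k}.ncard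

end HalfPeriod
/-- `hp` is a 3-decomposable `30`-half-period, witnessed by the labeling
`A = {a 0, …, a 9}`, `B = {b 0, …, b 9}`, `C = {c 0, …, c 9}` (the element with
1-indexed subscript `j` is `a (j-1)`, etc.): the initial arrangement is
`(a_10, a_9, …, a_1, b_1, …, b_10, c_1, …, c_10)`, every transposition between `A`
and `B` occurs before every transposition between `C` and `A ∪ B`, and every
transposition between `A` and `C` occurs before every transposition between `B`
and `C`. -/
def IsThreeDecompLabeling30 (hp : HalfPeriod 30) (a b c : Fin 10 → Fin 30) : Prop :=
  Function.Injective (Sum.elim a (Sum.elim b c)) ∧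
  (∀ i : Fin 10, hp.pos 0 (a i) = 10 - (i : ℕ)) ∧
  (∀ i : Fin 10, hp.pos 0 (b i) = 11 + (i : ℕ)) ∧
  (∀ i : Fin 10, hp.pos 0 (c i) = 21 + (i : ℕ)) ∧
  (∀ s t, s < HalfPeriod.steps 30 → t < HalfPeriod.steps 30 →
    (∃ i j, hp.SwapsAt s (a i) (b j)) →
    (∃ i x, ((∃ j, x = a j) ∨ (∃ j, x = b j)) ∧ hp.SwapsAt t (c i) x) → s < t) ∧
  (∀ s t, s < HalfPeriod.steps 30 → t < HalfPeriod.steps 30 →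
    (∃ i j, hp.SwapsAt s (a i) (c j)) →
    (∃ i j, hp.SwapsAt t (b i) (c j)) → s < t)

/-- `x` and `y` belong to the same one of the three classes `A`, `B`, `C`. -/
def SameClass (a b c : Fin 10 → Fin 30) (x y : Fin 30) : Prop :=
  (∃ i j, x = a i ∧ y = a j) ∨ (∃ i j, x = b i ∧ y = b j) ∨ (∃ i j, x = c i ∧ y = c j)
/-- `hal(x_{j+1})`: the number of indices `i < j` such that the transposition between
`x j` and `x i` occurs in the 15th gate (swaps positions `15` and `16`). -/
noncomputable def halOf (hp : HalfPeriod 30) (x : Fin 10 → Fin 30) (j : Fin 10) : ℕ :=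
  {i : Fin 10 | i < j ∧ ∃ t, t < HalfPeriod.steps 30 ∧ hp.GateAt t 15 ∧
    hp.SwapsAt t (x j) (x i)}.ncard

/-- `N_15^{xx}`: the number of 15-transpositions between two elements of the class `x`. -/
noncomputable def N15Mono (hp : HalfPeriod 30) (x : Fin 10 → Fin 30) : ℕ :=
  {t : ℕ | t < HalfPeriod.steps 30 ∧ hp.GateAt t 15 ∧ ∃ i j, hp.SwapsAt t (x i) (x j)}.ncard

/-!
Rotate the half-period so that the class `A` starts in the first `m` positions, where `n = 3 * m`.
Counting how often the elements of `A` cross the gates `g` and `n - g` shows that the three classes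
force `3 * min m g` critical `g`-transpositions besides the monochromatic ones. The bounds on
`N_{≤ k}` therefore leave at most `6 * (g - m)` monochromatic ones at `g`, up to accumulation.
Conversely, every element of `A` rises past other elements of `A` at most once more than it falls
at each gate, which gives each class at least `2 * s` of them at the gates `m + s` and `2 * m - s`.
Hence all these inequalities are equalities for `s ≤ r`.

Equality is rigid. The first element `z` of `A` meets the next `q` elements at the `q` gates in the
middle, so it meets each of the remaining `2 * r` elements at one of the first `r` gates (an early
element) or at one of the last `r` (a late element). At the central gate, there are at most
`r.choose 2` transpositions between early elements and as many between late ones. Whether an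
early and a late element are transposed before or after `z` passes is determined by their order, so
a flow argument bounds the transpositions between the two kinds by the number of elements that can
be the riser, which excludes the last element of `A`. The first `q + 1` elements contribute at most
`(q + 1).choose 2 + 2` as risers, again by a flow argument. For `m = 10` and `q = r = 3`, the total
is `19`.
-/

open Finset

section PairCounting

variable {ι α : Type*} [LinearOrder α] {s : Finset ι} {f : ι → α}

lemma card_filter_lt_product_self (hf : Set.InjOn f s) :
    #{p ∈ s ×ˢ s | f p.1 < f p.2} = (#s).choose 2 := by
  classical
  rw [← Sym2.card_image_offDiag]
  refine card_bij (fun p _ ↦ s(p.1, p.2)) ?_ ?_ ?_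
  · intro p hp
    rw [mem_filter, mem_product] at hp
    refine mem_image.mpr ⟨p, mem_offDiag.mpr ⟨hp.1.1, hp.1.2, ?_⟩, rfl⟩
    exact fun h ↦ hp.2.ne (congrArg f h)
  · rintro ⟨x, y⟩ hp ⟨x', y'⟩ hp' h
    rw [mem_filter] at hp hp'
    rcases Sym2.eq_iff.mp h with ⟨rfl, rfl⟩ | ⟨rfl, rfl⟩
    · rfl
    · exact absurd hp.2 hp'.2.not_gt
  · intro e he
    obtain ⟨⟨x, y⟩, hxy, rfl⟩ := mem_image.mp he
    rw [mem_offDiag] at hxy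
    rcases (hf.ne hxy.1 hxy.2.1 hxy.2.2).lt_or_gt with h | h
    · exact ⟨(x, y), by simp_all, rfl⟩
    · exact ⟨(y, x), by simp_all, Sym2.eq_swap⟩

end PairCounting

namespace HalfPeriod

variable {n : ℕ}

/-- At step `t` the element `x` rises from position `g` to position `g + 1`, and `y` falls from
`g + 1` to `g`: the `g`-transposition `xy → yx`, with its direction recorded. -/
structure Transposes (hp : HalfPeriod n) (t g : ℕ) (x y : Fin n) : Prop where
  pos_riser : hp.pos t x = g
  pos_faller : hp.pos t y = g + 1
  pos_succ_riser : hp.pos (t + 1) x = g + 1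
  pos_succ_faller : hp.pos (t + 1) y = g

section Transpositions

variable {hp : HalfPeriod n} {s t g g' : ℕ} {x y x' y' z : Fin n}

instance : Decidable (hp.Moved t x) := inferInstanceAs (Decidable (_ ≠ _))

instance : Decidable (hp.SwapsAt t x y) := inferInstanceAs (Decidable (_ ∧ _))

instance : Decidable (hp.GateAt t g) := inferInstanceAs (Decidable (∃ _ _, _))

instance : Decidable (hp.Critical t g) := inferInstanceAs (Decidable (_ ∨ _))

lemma exists_transposes (hp : HalfPeriod n) (ht : t < steps n) :
    ∃ g x y, hp.Transposes t g x y ∧ ∀ z, z ≠ x → z ≠ y → hp.pos (t + 1) z = hp.pos t z := by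
  obtain ⟨x, y, hy, hx', hy', hz⟩ := hp.step t ht
  exact ⟨hp.pos t x, x, y, ⟨rfl, hy, hx', hy'⟩, hz⟩

lemma gateAt_iff : hp.GateAt t g ↔ ∃ x y, hp.Transposes t g x y :=
  ⟨fun ⟨x, y, h₁, h₂, h₃, h₄⟩ ↦ ⟨x, y, h₁, h₂, h₃, h₄⟩,
    fun ⟨x, y, h₁, h₂, h₃, h₄⟩ ↦ ⟨x, y, h₁, h₂, h₃, h₄⟩⟩

lemma Transposes.unique (ht : t < steps n) (h : hp.Transposes t g x y)
    (h' : hp.Transposes t g' x' y') : g = g' ∧ x = x' ∧ y = y' := by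
  obtain ⟨k, a, b, hab, hfix⟩ := hp.exists_transposes ht
  have eq_canonical {i u v} (h : hp.Transposes t i u v) : u = a ∧ v = b := by
    obtain ⟨h₁, h₂, h₃, h₄⟩ := h
    obtain ⟨e₁, e₂, e₃, -⟩ := hab
    have := hfix u
    have := hfix v
    grind
  obtain ⟨rfl, rfl⟩ := eq_canonical h
  obtain ⟨rfl, rfl⟩ := eq_canonical h'
  exact ⟨h.pos_riser.symm.trans h'.pos_riser, rfl, rfl⟩

lemma Transposes.pos_succ_of_ne (ht : t < steps n) (h : hp.Transposes t g x y)
    (hx : z ≠ x) (hy : z ≠ y) : hp.pos (t + 1) z = hp.pos t z := by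
  obtain ⟨k, a, b, hab, hfix⟩ := hp.exists_transposes ht
  obtain ⟨-, rfl, rfl⟩ := h.unique ht hab
  exact hfix z hx hy

lemma Transposes.ne (h : hp.Transposes t g x y) : x ≠ y := by
  rintro rfl
  have := h.pos_riser.symm.trans h.pos_faller
  omega

lemma Transposes.moved_iff (ht : t < steps n) (h : hp.Transposes t g x y) :
    hp.Moved t z ↔ z = x ∨ z = y := by
  constructor
  · contrapose!
    rintro ⟨hx, hy⟩
    exact not_not.mpr (h.pos_succ_of_ne ht hx hy)
  · obtain ⟨h₁, h₂, h₃, h₄⟩ := h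
    rintro (rfl | rfl) <;> unfold Moved <;> omega

lemma Transposes.swapsAt_iff (ht : t < steps n) (h : hp.Transposes t g x y) :
    hp.SwapsAt t x' y' ↔ (x' = x ∧ y' = y) ∨ (x' = y ∧ y' = x) := by
  have := h.ne
  rw [SwapsAt, h.moved_iff ht, h.moved_iff ht]
  grind

lemma Transposes.gateAt_iff (ht : t < steps n) (h : hp.Transposes t g x y) :
    hp.GateAt t g' ↔ g' = g := by
  rw [HalfPeriod.gateAt_iff]
  constructor
  · rintro ⟨a, b, hab⟩
    exact (hab.unique ht h).1
  · rintro rfl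
    exact ⟨x, y, h⟩

lemma transposes_of_lt_of_gt (ht : t < steps n) (h : hp.pos t x < hp.pos t y)
    (h' : hp.pos (t + 1) y < hp.pos (t + 1) x) : hp.Transposes t (hp.pos t x) x y := by
  obtain ⟨g, a, b, ⟨e₁, e₂, e₃, e₄⟩, hfix⟩ := hp.exists_transposes ht
  have hinj := hp.pos_inj t ht.le
  have hx : x = a := by
    have := hfix x
    have := hfix y
    grind [Function.Injective]
  have hy : y = b := by
    have := hfix y
    grind [Function.Injective]
  subst hx hy
  exact ⟨rfl, by omega, by omega, by omega⟩

lemma exists_transposes_of_lt_of_gt (hst : s ≤ t) (ht : t ≤ steps n)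
    (h : hp.pos s x < hp.pos s y) (h' : hp.pos t y < hp.pos t x) :
    ∃ u g, s ≤ u ∧ u < t ∧ hp.Transposes u g x y := by
  induction t, hst using Nat.le_induction with
  | base => omega
  | succ u hu ih =>
    rcases lt_trichotomy (hp.pos u x) (hp.pos u y) with hlt | heq | hgt
    · exact ⟨u, _, hu, u.lt_succ_self, transposes_of_lt_of_gt ht hlt h'⟩
    · obtain rfl := hp.pos_inj u (Nat.le_of_succ_le ht) heq
      exact absurd h' (lt_irrefl _)
    · obtain ⟨v, g, hv⟩ := ih (Nat.le_of_succ_le ht) hgt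
      exact ⟨v, g, hv.1, by omega, hv.2.2⟩

lemma pos_steps_add_pos_zero (hp : HalfPeriod n) (x : Fin n) :
    hp.pos (steps n) x + hp.pos 0 x = n + 1 := by
  have hrev : hp.pos (steps n) x = n + 1 - hp.pos 0 x := hp.reverse x
  have := hp.pos_mem 0 (Nat.zero_le _) x
  omega

/-- The step at which `x` and `y` are transposed, where `x` precedes `y` initially. -/
def time (hp : HalfPeriod n) (x y : Fin n) : ℕ :=
  Nat.findGreatest (fun t ↦ hp.pos t x < hp.pos t y) (steps n)

/-- The `g` for which the transposition of `x` and `y` is a `g`-transposition, where `x` precedes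
`y` initially. -/
def gate (hp : HalfPeriod n) (x y : Fin n) : ℕ :=
  hp.pos (hp.time x y) x

lemma time_lt_steps (hxy : hp.pos 0 x < hp.pos 0 y) : hp.time x y < steps n := by
  have hlt : hp.pos (hp.time x y) x < hp.pos (hp.time x y) y :=
    Nat.findGreatest_spec (P := fun t ↦ hp.pos t x < hp.pos t y) (Nat.zero_le _) hxy
  refine (Nat.findGreatest_le _).lt_of_ne fun h : hp.time x y = steps n ↦ ?_
  have := hp.pos_steps_add_pos_zero x
  have := hp.pos_steps_add_pos_zero y
  rw [h] at hlt
  omega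

lemma transposes_time (hxy : hp.pos 0 x < hp.pos 0 y) :
    hp.Transposes (hp.time x y) (hp.gate x y) x y := by
  have ht := time_lt_steps hxy
  have hlt : hp.pos (hp.time x y) x < hp.pos (hp.time x y) y :=
    Nat.findGreatest_spec (P := fun t ↦ hp.pos t x < hp.pos t y) (Nat.zero_le _) hxy
  have hge : ¬ hp.pos (hp.time x y + 1) x < hp.pos (hp.time x y + 1) y :=
    Nat.findGreatest_is_greatest (P := fun t ↦ hp.pos t x < hp.pos t y) (Nat.lt_succ_self _) ht
  have hne : x ≠ y := ne_of_apply_ne _ hxy.ne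
  have hne' : hp.pos (hp.time x y + 1) x ≠ hp.pos (hp.time x y + 1) y :=
    (hp.pos_inj _ (Nat.succ_le_of_lt ht)).ne hne
  exact transposes_of_lt_of_gt ht hlt (by omega)

/-- The `n.choose 2` pairs that must be transposed use up all the steps, so that no pair is ever
transposed back. -/
lemma Transposes.lt_and_time_eq (ht : t < steps n) (h : hp.Transposes t g x y) :
    hp.pos 0 x < hp.pos 0 y ∧ hp.time x y = t := by
  have time_mem : ∀ p ∈ ({p | hp.pos 0 p.1 < hp.pos 0 p.2} : Finset (Fin n × Fin n)),
      hp.time p.1 p.2 ∈ range (steps n) :=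
    fun p hlt ↦ mem_range.mpr (time_lt_steps (mem_filter.mp hlt).2)
  have time_injOn : Set.InjOn (fun p : Fin n × Fin n ↦ hp.time p.1 p.2)
      ({p | hp.pos 0 p.1 < hp.pos 0 p.2} : Finset (Fin n × Fin n)) := by
    intro p hlt p' hlt' heq
    have h₁ := transposes_time (mem_filter.mp hlt).2
    have h₂ := transposes_time (mem_filter.mp hlt').2
    dsimp only at heq
    rw [heq] at h₁
    obtain ⟨-, e₁, e₂⟩ := h₁.unique (time_lt_steps (mem_filter.mp hlt').2) h₂
    exact Prod.ext e₁ e₂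
  have card_eq : #(range (steps n)) = #{p : Fin n × Fin n | hp.pos 0 p.1 < hp.pos 0 p.2} := by
    have := card_filter_lt_product_self (hp.pos_inj 0 (Nat.zero_le _)).injOn (s := univ)
    rw [card_range, ← univ_product_univ, this, card_univ, Fintype.card_fin, Nat.choose_two_right,
      steps]
  obtain ⟨p, hlt, heq⟩ := surjOn_of_injOn_of_card_le _ time_mem time_injOn card_eq.le
    (mem_coe.mpr (mem_range.mpr ht))
  have hp' := transposes_time (mem_filter.mp hlt).2
  dsimp only at heq
  rw [heq] at hp'
  obtain ⟨-, rfl, rfl⟩ := h.unique ht hp'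
  exact ⟨(mem_filter.mp hlt).2, heq⟩

lemma Transposes.gate_eq (ht : t < steps n) (h : hp.Transposes t g x y) : hp.gate x y = g := by
  rw [gate, (h.lt_and_time_eq ht).2, h.pos_riser]

lemma pos_lt_iff_le_time (hxy : hp.pos 0 x < hp.pos 0 y) (ht : t ≤ steps n) :
    hp.pos t x < hp.pos t y ↔ t ≤ hp.time x y := by
  refine ⟨fun h ↦ Nat.le_findGreatest ht h, fun h ↦ ?_⟩
  by_contra hge
  have hne : x ≠ y := ne_of_apply_ne _ hxy.ne
  have hgt : hp.pos t y < hp.pos t x := (not_lt.mp hge).lt_of_ne' ((hp.pos_inj t ht).ne hne)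
  have htime := time_lt_steps hxy
  have hlt : hp.pos (hp.time x y) x < hp.pos (hp.time x y) y := by
    rw [(transposes_time hxy).pos_riser, (transposes_time hxy).pos_faller]
    exact Nat.lt_succ_self _
  obtain ⟨u, g, -, hu, hyx⟩ := exists_transposes_of_lt_of_gt h htime.le hgt hlt
  exact (hyx.lt_and_time_eq (hu.trans htime)).1.not_gt hxy

lemma pos_gt_iff_time_lt (hxy : hp.pos 0 x < hp.pos 0 y) (ht : t ≤ steps n) :
    hp.pos t y < hp.pos t x ↔ hp.time x y < t := by
  have hne : x ≠ y := ne_of_apply_ne _ hxy.ne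
  rw [← ((hp.pos_inj t ht).ne hne).symm.le_iff_lt, ← not_lt, pos_lt_iff_le_time hxy ht, not_le]

end Transpositions

section Flow

variable {hp : HalfPeriod n} {g s t : ℕ} {p : Fin n × Fin n}

/-- The `g`-transpositions occurring at the steps `s, …, t - 1`, as pairs (riser, faller). -/
def swaps (hp : HalfPeriod n) (g s t : ℕ) : Finset (Fin n × Fin n) :=
  {p | hp.pos 0 p.1 < hp.pos 0 p.2 ∧ hp.gate p.1 p.2 = g ∧ s ≤ hp.time p.1 p.2 ∧
    hp.time p.1 p.2 < t}

lemma mem_swaps : p ∈ hp.swaps g s t ↔ hp.pos 0 p.1 < hp.pos 0 p.2 ∧ hp.gate p.1 p.2 = g ∧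
    s ≤ hp.time p.1 p.2 ∧ hp.time p.1 p.2 < t := by
  simp [swaps]

lemma swaps_succ_of_transposes {k : ℕ} {x y : Fin n} (hst : s ≤ t) (ht : t < steps n)
    (h : hp.Transposes t k x y) :
    hp.swaps g s (t + 1) = if k = g then insert (x, y) (hp.swaps g s t) else hp.swaps g s t := by
  obtain ⟨hxy, htime⟩ := h.lt_and_time_eq ht
  have hgate := h.gate_eq ht
  have eq_of_time_eq {p : Fin n × Fin n} (hlt : hp.pos 0 p.1 < hp.pos 0 p.2)
      (hp' : hp.time p.1 p.2 = t) : p = (x, y) := by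
    have h' := transposes_time hlt
    rw [hp'] at h'
    obtain ⟨-, h₁, h₂⟩ := h'.unique ht h
    exact Prod.ext h₁ h₂
  split_ifs with hk <;> ext p
  all_goals
    have := @eq_of_time_eq p
    simp only [mem_swaps, mem_insert]
    grind

lemma Transposes.card_filter_lt_pos_succ {x y : Fin n} (ht : t < steps n)
    (h : hp.Transposes t g x y) (Q : Finset (Fin n)) :
    #{z ∈ Q | g < hp.pos (t + 1) z} + (if y ∈ Q then 1 else 0) =
      #{z ∈ Q | g < hp.pos t z} + (if x ∈ Q then 1 else 0) := by
  rw [card_filter, card_filter, ← sum_ite_eq' Q y fun _ ↦ 1, ← sum_ite_eq' Q x fun _ ↦ 1]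
  simp only [← sum_add_distrib]
  refine sum_congr rfl fun z _ ↦ ?_
  have := h.pos_succ_of_ne (z := z) ht
  grind [Transposes]

lemma card_filter_lt_pos_add_card_falls (hp : HalfPeriod n) (hst : s ≤ t) (ht : t ≤ steps n)
    (Q : Finset (Fin n)) :
    #{z ∈ Q | g < hp.pos t z} + #{p ∈ hp.swaps g s t | p.2 ∈ Q} =
      #{z ∈ Q | g < hp.pos s z} + #{p ∈ hp.swaps g s t | p.1 ∈ Q} := by
  induction t, hst using Nat.le_induction with
  | base =>
    have hempty : hp.swaps g s s = ∅ := by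
      ext p
      simp only [mem_swaps, notMem_empty, iff_false]
      omega
    simp [hempty]
  | succ t hst ih =>
    obtain ⟨k, x, y, h, hfix⟩ := hp.exists_transposes ht
    rw [swaps_succ_of_transposes hst ht h]
    have hnot : (x, y) ∉ hp.swaps g s t := by
      simp [mem_swaps, (h.lt_and_time_eq ht).2]
    have := ih (Nat.le_of_succ_le ht)
    split_ifs with hk
    · subst hk
      have hflow := h.card_filter_lt_pos_succ ht Q
      have hinsert {P : Fin n × Fin n → Prop} [DecidablePred P] :
          #{p ∈ insert (x, y) (hp.swaps k s t) | P p} =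
            #{p ∈ hp.swaps k s t | P p} + if P (x, y) then 1 else 0 := by
        split_ifs with hP
        · rw [filter_insert, if_pos hP, card_insert_of_notMem (by simp [hnot])]
        · rw [filter_insert, if_neg hP, add_zero]
      rw [hinsert, hinsert]
      dsimp only
      omega
    · have hpos : {z ∈ Q | g < hp.pos (t + 1) z} = {z ∈ Q | g < hp.pos t z} := by
        refine filter_congr fun z _ ↦ ?_
        have := hfix z
        grind [Transposes]
      rwa [hpos]

lemma card_outflow_le (hp : HalfPeriod n) (hst : s ≤ t) (ht : t ≤ steps n) (Q : Finset (Fin n)) :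
    #{p ∈ hp.swaps g s t | p.1 ∈ Q ∧ p.2 ∉ Q} ≤
      #Q + #{p ∈ hp.swaps g s t | p.1 ∉ Q ∧ p.2 ∈ Q} := by
  have hflow := hp.card_filter_lt_pos_add_card_falls (g := g) hst ht Q
  have hrises := card_filter_add_card_filter_not (s := {p ∈ hp.swaps g s t | p.1 ∈ Q})
    (fun p ↦ p.2 ∈ Q)
  have hfalls := card_filter_add_card_filter_not (s := {p ∈ hp.swaps g s t | p.2 ∈ Q})
    (fun p ↦ p.1 ∈ Q)
  simp only [filter_filter] at hrises hfalls
  have hle : #{z ∈ Q | g < hp.pos t z} ≤ #Q := card_filter_le _ _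
  simp only [and_comm] at *
  omega

lemma sum_filter_gateAt (hp : HalfPeriod n) (F : ℕ → ℕ) :
    ∑ t ∈ range (steps n) with hp.GateAt t g, F t =
      ∑ p ∈ hp.swaps g 0 (steps n), F (hp.time p.1 p.2) := by
  symm
  refine sum_bij (fun p _ ↦ hp.time p.1 p.2) ?_ ?_ ?_ fun _ _ ↦ rfl
  · intro p hmem
    obtain ⟨hlt, rfl, -, htime⟩ := mem_swaps.mp hmem
    exact mem_filter.mpr ⟨mem_range.mpr htime, gateAt_iff.mpr ⟨_, _, transposes_time hlt⟩⟩
  · intro p hmem p' hmem' heq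
    have h := transposes_time (mem_swaps.mp hmem).1
    have h' := transposes_time (mem_swaps.mp hmem').1
    rw [heq] at h
    obtain ⟨-, h₁, h₂⟩ := h.unique (mem_swaps.mp hmem').2.2.2 h'
    exact Prod.ext h₁ h₂
  · intro t hmem
    obtain ⟨ht, hgate⟩ := mem_filter.mp hmem
    rw [mem_range] at ht
    obtain ⟨x, y, h⟩ := gateAt_iff.mp hgate
    obtain ⟨hlt, rfl⟩ := h.lt_and_time_eq ht
    exact ⟨(x, y), mem_swaps.mpr ⟨hlt, h.gate_eq ht, Nat.zero_le _, ht⟩, rfl⟩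

end Flow

section CriticalTranspositions

variable {hp : HalfPeriod n} {t g : ℕ} {x y : Fin n} {A : Finset (Fin n)}

/-- The number of `g`-critical transpositions. -/
def numCritical (hp : HalfPeriod n) (g : ℕ) : ℕ :=
  #{t ∈ range (steps n) | hp.Critical t g}

/-- The number `N_g^{AA}` of `g`-critical transpositions between two elements of `A`. -/
def mono (hp : HalfPeriod n) (A : Finset (Fin n)) (g : ℕ) : ℕ :=
  #{t ∈ range (steps n) | hp.Critical t g ∧ ∃ x ∈ A, ∃ y ∈ A, hp.SwapsAt t x y}

/-- The number of `g`-critical transpositions involving an element of `A`, where those between two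
elements of `A` count twice. -/
def moves (hp : HalfPeriod n) (A : Finset (Fin n)) (g : ℕ) : ℕ :=
  ∑ t ∈ range (steps n) with hp.Critical t g, #{z ∈ A | hp.Moved t z}

/-- The `g`-transpositions between two elements of `A`, as pairs (riser, faller). -/
def swapsIn (hp : HalfPeriod n) (A : Finset (Fin n)) (g : ℕ) : Finset (Fin n × Fin n) :=
  {p ∈ hp.swaps g 0 (steps n) | p.1 ∈ A ∧ p.2 ∈ A}

lemma NLe_eq_sum_numCritical (hp : HalfPeriod n) {k : ℕ} (hk : 2 * k < n) :
    hp.NLe k = ∑ g ∈ Icc 1 k, hp.numCritical g := by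
  have hunion : {t : ℕ | t < steps n ∧ hp.LeCritical t k} =
      ((Icc 1 k).biUnion fun g ↦ {t ∈ range (steps n) | hp.Critical t g} : Finset ℕ) := by
    ext t
    simp only [LeCritical, Set.mem_ofPred_eq, coe_biUnion, mem_coe, mem_Icc, coe_filter, mem_range,
      Set.mem_iUnion, exists_prop]
    grind
  rw [NLe, hunion, Set.ncard_coe_finset, card_biUnion]
  · rfl
  intro i hi j hj hij
  refine disjoint_filter.mpr fun t ht hti htj ↦ hij ?_
  rw [mem_range] at ht
  obtain ⟨g, x, y, h, -⟩ := hp.exists_transposes ht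
  rw [Critical, h.gateAt_iff ht, h.gateAt_iff ht] at hti htj
  rw [mem_coe, mem_Icc] at hi hj
  omega

lemma Transposes.exists_swapsAt_iff (ht : t < steps n) (h : hp.Transposes t g x y) :
    (∃ u ∈ A, ∃ v ∈ A, hp.SwapsAt t u v) ↔ x ∈ A ∧ y ∈ A := by
  simp only [h.swapsAt_iff ht]
  grind

lemma Transposes.card_moved (ht : t < steps n) (h : hp.Transposes t g x y) :
    #{z ∈ A | hp.Moved t z} = (if x ∈ A then 1 else 0) + if y ∈ A then 1 else 0 := by
  have hxy := h.ne
  have hmoved : {z ∈ A | hp.Moved t z} = ({z ∈ {x, y} | z ∈ A} : Finset (Fin n)) := by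
    ext z
    simp only [mem_filter, h.moved_iff ht, mem_insert, mem_singleton, and_comm]
  rw [hmoved, card_filter, sum_pair hxy]

lemma sum_moves_le_two_mul_numCritical {ι : Type*} [Fintype ι] (hp : HalfPeriod n)
    {A : ι → Finset (Fin n)} (hA : Pairwise fun i j ↦ Disjoint (A i) (A j)) (g : ℕ) :
    ∑ i, hp.moves (A i) g ≤ 2 * hp.numCritical g := by
  simp only [moves, numCritical]
  rw [sum_comm, mul_comm, ← smul_eq_mul, ← sum_const]
  refine sum_le_sum fun t ht ↦ ?_
  rw [mem_filter, mem_range] at ht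
  obtain ⟨k, x, y, h, -⟩ := hp.exists_transposes ht.1
  rw [← card_biUnion fun i _ j _ hij ↦ disjoint_filter_filter (hA hij)]
  refine (card_le_card fun z hz ↦ ?_).trans (card_le_two (a := x) (b := y))
  obtain ⟨i, -, hz⟩ := mem_biUnion.mp hz
  rw [mem_insert, mem_singleton, ← h.moved_iff ht.1]
  exact (mem_filter.mp hz).2

lemma sum_filter_critical (hp : HalfPeriod n) (hg : 2 * g < n) (F : ℕ → ℕ) :
    ∑ t ∈ range (steps n) with hp.Critical t g, F t =
      ∑ p ∈ hp.swaps g 0 (steps n), F (hp.time p.1 p.2) +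
        ∑ p ∈ hp.swaps (n - g) 0 (steps n), F (hp.time p.1 p.2) := by
  rw [← sum_filter_gateAt, ← sum_filter_gateAt, ← sum_union]
  · rw [← filter_or]
    rfl
  refine disjoint_filter.mpr fun t ht hg₁ hg₂ ↦ ?_
  rw [mem_range] at ht
  obtain ⟨k, x, y, h, -⟩ := hp.exists_transposes ht
  rw [h.gateAt_iff ht] at hg₁ hg₂
  omega

lemma card_swapsIn (hp : HalfPeriod n) (A : Finset (Fin n)) (g : ℕ) :
    #(hp.swapsIn A g) = ∑ p ∈ hp.swaps g 0 (steps n),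
      if ∃ x ∈ A, ∃ y ∈ A, hp.SwapsAt (hp.time p.1 p.2) x y then 1 else 0 := by
  rw [swapsIn, card_filter]
  refine sum_congr rfl fun p hmem ↦ ?_
  have hlt := (mem_swaps.mp hmem).1
  simp only [(transposes_time hlt).exists_swapsAt_iff (time_lt_steps hlt)]

lemma mono_eq_card_swapsIn (hp : HalfPeriod n) (A : Finset (Fin n)) (hg : 2 * g = n) :
    hp.mono A g = #(hp.swapsIn A g) := by
  have hg' : n - g = g := by omega
  rw [mono, ← filter_filter, card_filter, card_swapsIn,
    ← hp.sum_filter_gateAt fun t ↦ if ∃ x ∈ A, ∃ y ∈ A, hp.SwapsAt t x y then 1 else 0]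
  simp only [Critical, hg', or_self]

lemma mono_eq_card_swapsIn_add (hp : HalfPeriod n) (A : Finset (Fin n)) (hg : 2 * g < n) :
    hp.mono A g = #(hp.swapsIn A g) + #(hp.swapsIn A (n - g)) := by
  rw [mono, ← filter_filter, card_filter, hp.sum_filter_critical hg, card_swapsIn, card_swapsIn]

lemma moves_eq (hp : HalfPeriod n) (A : Finset (Fin n)) (hg : 2 * g < n) :
    hp.moves A g =
      #{p ∈ hp.swaps g 0 (steps n) | p.1 ∈ A} + #{p ∈ hp.swaps g 0 (steps n) | p.2 ∈ A} +
      (#{p ∈ hp.swaps (n - g) 0 (steps n) | p.1 ∈ A} +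
        #{p ∈ hp.swaps (n - g) 0 (steps n) | p.2 ∈ A}) := by
  rw [moves, hp.sum_filter_critical hg]
  simp only [card_filter, ← sum_add_distrib]
  congr 1 <;> refine sum_congr rfl fun p hmem ↦ ?_
  all_goals
    have hlt := (mem_swaps.mp hmem).1
    rw [← card_filter, (transposes_time hlt).card_moved (time_lt_steps hlt)]

end CriticalTranspositions

section Rotation

variable {hp : HalfPeriod n} {T t u g : ℕ} {x y : Fin n}

/-- Positions at time `T + t` when `hp` is continued past its last arrangement, with all
arrangements reversed. -/
def shiftedPos (hp : HalfPeriod n) (T t : ℕ) (x : Fin n) : ℕ :=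
  if T + t ≤ steps n then hp.pos (T + t) x else n + 1 - hp.pos (T + t - steps n) x

lemma shiftedPos_of_le (h : T + t ≤ steps n) : hp.shiftedPos T t = hp.pos (T + t) :=
  funext fun _ ↦ if_pos h

lemma shiftedPos_add_pos (hp : HalfPeriod n) (h : T + t = steps n + u) (hu : u ≤ steps n)
    (x : Fin n) : hp.shiftedPos T t x + hp.pos u x = n + 1 := by
  have hmem := hp.pos_mem u hu x
  rcases u.eq_zero_or_pos with rfl | hpos
  · rw [shiftedPos_of_le h.le, h]
    exact hp.pos_steps_add_pos_zero x
  · rw [shiftedPos, if_neg (by omega), h, Nat.add_sub_cancel_left]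
    omega

/-- The half-period of the same periodic sequence of arrangements that starts at time `T`. -/
def rotate (hp : HalfPeriod n) (T : ℕ) (hT : T ≤ steps n) : HalfPeriod n where
  pos := hp.shiftedPos T
  pos_mem t ht x := by
    rcases le_total (T + t) (steps n) with h | h
    · rw [shiftedPos_of_le h]
      exact hp.pos_mem _ h x
    · obtain ⟨u, hu⟩ := Nat.exists_eq_add_of_le h
      have hu' : u ≤ steps n := by rw [steps] at *; omega
      have := hp.shiftedPos_add_pos hu hu' x
      have := hp.pos_mem u hu' x
      omega
  pos_inj t ht := by
    rcases le_total (T + t) (steps n) with h | h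
    · rw [shiftedPos_of_le h]
      exact hp.pos_inj _ h
    · obtain ⟨u, hu⟩ := Nat.exists_eq_add_of_le h
      have hu' : u ≤ steps n := by rw [steps] at *; omega
      intro x y hxy
      have := hp.shiftedPos_add_pos hu hu' x
      have := hp.shiftedPos_add_pos hu hu' y
      exact hp.pos_inj u hu' (by omega)
  step t ht := by
    rcases lt_or_ge (T + t) (steps n) with h | h
    · rw [shiftedPos_of_le h.le, shiftedPos_of_le (t := t + 1) h]
      exact hp.step (T + t) h
    · obtain ⟨u, hu⟩ := Nat.exists_eq_add_of_le h
      have hu' : u < steps n := by rw [steps] at *; omega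
      have hpos := hp.shiftedPos_add_pos hu hu'.le
      have hpos' := hp.shiftedPos_add_pos (T := T) (t := t + 1) (u := u + 1) (by omega) hu'
      obtain ⟨x, y, hy, hx', hy', hz⟩ := hp.step u hu'
      refine ⟨y, x, ?_, ?_, ?_, fun z hzy hzx ↦ ?_⟩
      · grind
      · grind
      · grind
      · have := hz z hzx hzy
        grind
  reverse x := by
    change hp.shiftedPos T (steps n) x = n + 1 - hp.shiftedPos T 0 x
    rw [shiftedPos_of_le (t := 0) hT]
    have := hp.shiftedPos_add_pos (T := T) (t := steps n) (add_comm _ _) hT x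
    rw [add_zero]
    omega

lemma pos_rotate_zero (hT : T ≤ steps n) : (hp.rotate T hT).pos 0 = hp.pos T :=
  shiftedPos_of_le (t := 0) hT

lemma exists_transposes_rotate (hp : HalfPeriod n) (hT : T ≤ steps n) (ht : t < steps n) :
    ∃ g g' x y, hp.Transposes ((T + t) % steps n) g x y ∧
      ((hp.rotate T hT).Transposes t g' x y ∧ g' = g ∨
        (hp.rotate T hT).Transposes t g' y x ∧ g + g' = n) := by
  rcases lt_or_ge (T + t) (steps n) with h | h
  · rw [Nat.mod_eq_of_lt h]
    obtain ⟨g, x, y, ⟨h₁, h₂, h₃, h₄⟩, -⟩ := hp.exists_transposes h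
    refine ⟨g, g, x, y, ⟨h₁, h₂, h₃, h₄⟩, Or.inl ⟨⟨?_, ?_, ?_, ?_⟩, rfl⟩⟩ <;>
      simpa only [rotate, shiftedPos_of_le h.le, shiftedPos_of_le (t := t + 1) h]
  · obtain ⟨u, hu⟩ := Nat.exists_eq_add_of_le h
    have hu' : u < steps n := by omega
    rw [hu, Nat.add_mod_left, Nat.mod_eq_of_lt hu']
    obtain ⟨g, x, y, ⟨h₁, h₂, h₃, h₄⟩, -⟩ := hp.exists_transposes hu'
    have hpos := hp.shiftedPos_add_pos hu hu'.le
    have hpos' := hp.shiftedPos_add_pos (T := T) (t := t + 1) (u := u + 1) (by omega) hu'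
    have hmem := hp.pos_mem u hu'.le y
    refine ⟨g, n - g, x, y, ⟨h₁, h₂, h₃, h₄⟩, Or.inr ⟨⟨?_, ?_, ?_, ?_⟩, by omega⟩⟩ <;>
      simp only [rotate] <;> grind

lemma moved_rotate (hT : T ≤ steps n) (ht : t < steps n) :
    (hp.rotate T hT).Moved t x ↔ hp.Moved ((T + t) % steps n) x := by
  have hmod : (T + t) % steps n < steps n := Nat.mod_lt _ (by omega)
  obtain ⟨g, g', u, v, h, ⟨h', -⟩ | ⟨h', -⟩⟩ := hp.exists_transposes_rotate hT ht
  · rw [h.moved_iff hmod, h'.moved_iff ht]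
  · rw [h.moved_iff hmod, h'.moved_iff ht, or_comm]

lemma swapsAt_rotate (hT : T ≤ steps n) (ht : t < steps n) :
    (hp.rotate T hT).SwapsAt t x y ↔ hp.SwapsAt ((T + t) % steps n) x y := by
  simp only [SwapsAt, moved_rotate hT ht]

lemma critical_rotate (hT : T ≤ steps n) (ht : t < steps n) (hg : g ≤ n) :
    (hp.rotate T hT).Critical t g ↔ hp.Critical ((T + t) % steps n) g := by
  have hmod : (T + t) % steps n < steps n := Nat.mod_lt _ (by omega)
  obtain ⟨k, k', u, v, h, ⟨h', hk⟩ | ⟨h', hk⟩⟩ := hp.exists_transposes_rotate hT ht <;>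
    rw [Critical, Critical, h.gateAt_iff hmod, h.gateAt_iff hmod, h'.gateAt_iff ht,
      h'.gateAt_iff ht] <;> omega

lemma sum_range_add_mod (F : ℕ → ℕ) (T N : ℕ) :
    ∑ t ∈ range N, F ((T + t) % N) = ∑ t ∈ range N, F t := by
  have himage := sum_image (f := F) (Nat.mod_injOn_Ico T N)
  rw [Nat.image_Ico_mod, sum_Ico_eq_sum_range, Nat.add_sub_cancel_left] at himage
  exact himage.symm

lemma mono_rotate (hp : HalfPeriod n) (hT : T ≤ steps n) (hg : g ≤ n) (A : Finset (Fin n)) :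
    (hp.rotate T hT).mono A g = hp.mono A g := by
  rw [mono, mono, card_filter, card_filter]
  refine (sum_congr rfl fun t ht ↦ ?_).trans (sum_range_add_mod _ T _)
  simp only [critical_rotate hT (mem_range.mp ht) hg, swapsAt_rotate hT (mem_range.mp ht)]

lemma moves_rotate (hp : HalfPeriod n) (hT : T ≤ steps n) (hg : g ≤ n) (A : Finset (Fin n)) :
    (hp.rotate T hT).moves A g = hp.moves A g := by
  rw [moves, moves, sum_filter, sum_filter]
  refine (sum_congr rfl fun t ht ↦ ?_).trans (sum_range_add_mod _ T _)
  simp only [critical_rotate hT (mem_range.mp ht) hg, moved_rotate hT (mem_range.mp ht)]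

end Rotation

section InitialSegment

variable {hp : HalfPeriod n} {A : Finset (Fin n)} {T t m g k : ℕ}

/-- `A` consists of the elements in the first `m` positions at time `t`. -/
def IsInitial (hp : HalfPeriod n) (t m : ℕ) (A : Finset (Fin n)) : Prop :=
  ∀ x, x ∈ A ↔ hp.pos t x ≤ m

lemma image_pos_univ (hp : HalfPeriod n) (ht : t ≤ steps n) : univ.image (hp.pos t) = Icc 1 n := by
  refine eq_of_subset_of_card_le (fun k hk ↦ ?_) ?_
  · obtain ⟨x, -, rfl⟩ := mem_image.mp hk
    exact mem_Icc.mpr (hp.pos_mem t ht x)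
  · rw [card_image_of_injective _ (hp.pos_inj t ht), card_univ, Fintype.card_fin, Nat.card_Icc]
    omega

lemma exists_pos_eq (hp : HalfPeriod n) (ht : t ≤ steps n) (hk : k ∈ Icc 1 n) :
    ∃ x, hp.pos t x = k := by
  rw [← hp.image_pos_univ ht] at hk
  obtain ⟨x, -, hx⟩ := mem_image.mp hk
  exact ⟨x, hx⟩

lemma card_filter_pos (hp : HalfPeriod n) (ht : t ≤ steps n) (P : ℕ → Prop) [DecidablePred P] :
    #{x | P (hp.pos t x)} = #{k ∈ Icc 1 n | P k} := by
  rw [← hp.image_pos_univ ht, filter_image, card_image_of_injective _ (hp.pos_inj t ht)]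

lemma isInitial_of_forall_lt (ht : t ≤ steps n) (hA : #A = m)
    (hlt : ∀ x ∈ A, ∀ y ∉ A, hp.pos t x < hp.pos t y) : hp.IsInitial t m A := by
  have hcard : #{x | hp.pos t x ≤ m} = m := by
    have hle := card_le_univ A
    rw [Fintype.card_fin, hA] at hle
    have hIcc : {k ∈ Icc 1 n | k ≤ m} = Icc 1 m := by
      ext k
      simp only [mem_filter, mem_Icc]
      omega
    rw [hp.card_filter_pos ht (· ≤ m), hIcc, Nat.card_Icc, Nat.add_sub_cancel]
  have hsub : A ⊆ ({x | hp.pos t x ≤ m} : Finset (Fin n)) := by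
    intro x hx
    by_contra hxm
    rw [mem_filter_univ, not_le] at hxm
    have hss : ({y | hp.pos t y ≤ m} : Finset (Fin n)) ⊂ A := by
      refine Finset.ssubset_iff_subset_ne.mpr ⟨fun y hy ↦ ?_, fun h ↦ ?_⟩
      · by_contra hyA
        exact (hxm.trans (hlt x hx y hyA)).not_ge (mem_filter_univ y |>.mp hy)
      · rw [← h, mem_filter_univ] at hx
        exact hxm.not_ge hx
    exact (card_lt_card hss).ne (hcard.trans hA.symm)
  intro x
  rw [eq_of_subset_of_card_le hsub (hcard.trans hA.symm).le, mem_filter_univ]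

lemma IsInitial.card_filter (hA : hp.IsInitial 0 m A) (P : ℕ → Prop) [DecidablePred P]
    (hmn : m ≤ n) : #{x ∈ A | P (hp.pos 0 x)} = #{k ∈ Icc 1 m | P k} := by
  have hfilter : {x ∈ A | P (hp.pos 0 x)} = ({x | hp.pos 0 x ≤ m ∧ P (hp.pos 0 x)} : Finset _) := by
    ext x
    simp [hA x]
  have hIcc : {k ∈ Icc 1 m | P k} = {k ∈ Icc 1 n | k ≤ m ∧ P k} := by
    ext k
    simp only [mem_filter, mem_Icc]
    grind
  rw [hfilter, hIcc, hp.card_filter_pos (Nat.zero_le _) fun k ↦ k ≤ m ∧ P k]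

lemma IsInitial.rotate (hT : T ≤ steps n) (hA : hp.IsInitial T m A) :
    (hp.rotate T hT).IsInitial 0 m A := by
  rwa [IsInitial, pos_rotate_zero]

lemma IsInitial.swapsIn_eq (hA : hp.IsInitial 0 m A) :
    hp.swapsIn A g = {p ∈ hp.swaps g 0 (steps n) | p.2 ∈ A} := by
  refine filter_congr fun p hmem ↦ and_iff_right_of_imp ?_
  rw [hA, hA]
  exact (mem_swaps.mp hmem).1.le.trans

lemma IsInitial.card_rises (hA : hp.IsInitial 0 m A) (hmn : m ≤ n) (hg : g ≤ n) :
    #{p ∈ hp.swaps g 0 (steps n) | p.1 ∈ A} + (m - g) = #(hp.swapsIn A g) + min m (n - g) := by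
  have hflow := hp.card_filter_lt_pos_add_card_falls (g := g) (Nat.zero_le _) le_rfl A
  have hstart : #{z ∈ A | g < hp.pos 0 z} = m - g := by
    have hIoc : {k ∈ Icc 1 m | g < k} = Ioc g m := by
      ext k
      simp only [mem_filter, mem_Icc, mem_Ioc]
      omega
    rw [hA.card_filter (g < ·) hmn, hIoc, Nat.card_Ioc]
  have hend : #{z ∈ A | g < hp.pos (steps n) z} = min m (n - g) := by
    have hpos (z) : g < hp.pos (steps n) z ↔ hp.pos 0 z ≤ n - g := by
      have := hp.pos_steps_add_pos_zero z
      omega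
    have hIcc : {k ∈ Icc 1 m | k ≤ n - g} = Icc 1 (min m (n - g)) := by
      ext k
      simp only [mem_filter, mem_Icc]
      omega
    simp only [hpos]
    rw [hA.card_filter (· ≤ n - g) hmn, hIcc, Nat.card_Icc, Nat.add_sub_cancel]
  rw [hA.swapsIn_eq]
  omega

lemma IsInitial.moves_eq (hT : T ≤ steps n) (hA : hp.IsInitial T m A) (hg : 2 * g < n)
    (hmg : m + g ≤ n) : hp.moves A g = 2 * hp.mono A g + 2 * min m g := by
  have hA₀ := hA.rotate hT
  have hgn : g ≤ n := by omega
  have hmn : m ≤ n := by omega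
  rw [← hp.moves_rotate hT hgn, ← hp.mono_rotate hT hgn, HalfPeriod.moves_eq _ A hg,
    mono_eq_card_swapsIn_add _ A hg, ← hA₀.swapsIn_eq, ← hA₀.swapsIn_eq]
  have := hA₀.card_rises hmn hgn
  have := hA₀.card_rises hmn (Nat.sub_le n g)
  omega

/-- Double counting: a critical transposition moves at most two elements of the classes. -/
lemma sum_mono_add_le_numCritical {ι : Type*} [Fintype ι] {A : ι → Finset (Fin n)}
    (hdisj : Pairwise fun i j ↦ Disjoint (A i) (A j))
    (hA : ∀ i, ∃ T ≤ steps n, hp.IsInitial T m (A i)) (hg : 2 * g < n) (hmg : m + g ≤ n) :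
    ∑ i, hp.mono (A i) g + Fintype.card ι * min m g ≤ hp.numCritical g := by
  have hmoves := hp.sum_moves_le_two_mul_numCritical hdisj g
  have heq (i) : hp.moves (A i) g = 2 * hp.mono (A i) g + 2 * min m g := by
    obtain ⟨T, hT, hT'⟩ := hA i
    exact hT'.moves_eq hT hg hmg
  simp only [heq, sum_add_distrib, ← mul_sum, sum_const, card_univ, smul_eq_mul] at hmoves
  linarith

end InitialSegment

section CentralClass

variable {hp : HalfPeriod n} {A : Finset (Fin n)} {m g k s : ℕ} {x : Fin n}

/-- `A` occupies the first `m` positions at the start, and any two of its elements are transposed at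
one of the gates `m + 1, …, 2 * m - 1`. -/
structure IsCentral (hp : HalfPeriod n) (m : ℕ) (A : Finset (Fin n)) : Prop where
  isInitial : hp.IsInitial 0 m A
  le : m ≤ n
  gate_mem : ∀ x ∈ A, ∀ y ∈ A, hp.pos 0 x < hp.pos 0 y → hp.gate x y ∈ Ioo m (2 * m)

/-- The number of `g`-transpositions in which `x` rises past another element of `A`. -/
def rises (hp : HalfPeriod n) (A : Finset (Fin n)) (g : ℕ) (x : Fin n) : ℕ :=
  #{p ∈ hp.swapsIn A g | p.1 = x}

/-- The number of `g`-transpositions in which another element of `A` rises past `x`. -/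
def falls (hp : HalfPeriod n) (A : Finset (Fin n)) (g : ℕ) (x : Fin n) : ℕ :=
  #{p ∈ hp.swapsIn A g | p.2 = x}

lemma mem_swapsIn {p : Fin n × Fin n} : p ∈ hp.swapsIn A g ↔
    hp.pos 0 p.1 < hp.pos 0 p.2 ∧ hp.gate p.1 p.2 = g ∧ p.1 ∈ A ∧ p.2 ∈ A := by
  have := time_lt_steps (hp := hp) (x := p.1) (y := p.2)
  simp only [swapsIn, mem_filter, mem_swaps]
  grind

lemma rises_eq (hx : x ∈ A) :
    hp.rises A g x = #{y ∈ {y ∈ A | hp.pos 0 x < hp.pos 0 y} | hp.gate x y = g} := by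
  refine card_nbij' Prod.snd (fun y ↦ (x, y)) ?_ ?_ ?_ ?_ <;> intro p hp' <;>
    simp only [mem_filter, mem_swapsIn, mem_coe] at * <;> grind

lemma falls_eq (hx : x ∈ A) :
    hp.falls A g x = #{y ∈ {y ∈ A | hp.pos 0 y < hp.pos 0 x} | hp.gate y x = g} := by
  refine card_nbij' Prod.fst (fun y ↦ (y, x)) ?_ ?_ ?_ ?_ <;> intro p hp' <;>
    simp only [mem_filter, mem_swapsIn, mem_coe] at * <;> grind

lemma card_swapsIn_eq_sum_rises (hp : HalfPeriod n) (A : Finset (Fin n)) (g : ℕ) :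
    #(hp.swapsIn A g) = ∑ x ∈ A, hp.rises A g x :=
  card_eq_sum_card_fiberwise fun _ hp' ↦ (mem_swapsIn.mp hp').2.2.1

lemma IsInitial.rises_le_falls_add_one (hA : hp.IsInitial 0 m A) (hx : x ∈ A) :
    hp.rises A g x ≤ hp.falls A g x + 1 := by
  have hflow := hp.card_outflow_le (g := g) (Nat.zero_le _) le_rfl {x}
  have hrises : hp.rises A g x ≤ #{p ∈ hp.swaps g 0 (steps n) | p.1 ∈ ({x} : Finset _) ∧
      p.2 ∉ ({x} : Finset _)} := by
    refine card_le_card fun p hmem ↦ ?_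
    simp only [swapsIn, mem_filter, mem_swaps, mem_singleton] at *
    grind
  have hfalls : #{p ∈ hp.swaps g 0 (steps n) | p.1 ∉ ({x} : Finset _) ∧
      p.2 ∈ ({x} : Finset _)} ≤ hp.falls A g x := by
    rw [falls, hA.swapsIn_eq]
    refine card_le_card fun p hmem ↦ ?_
    simp only [mem_filter, mem_singleton] at *
    grind
  rw [card_singleton] at hflow
  omega

lemma IsCentral.sum_rises (hA : hp.IsCentral m A) (hx : x ∈ A) :
    ∑ g ∈ Ioo m (2 * m), hp.rises A g x = m - hp.pos 0 x := by
  have hIoc : {k ∈ Icc 1 m | hp.pos 0 x < k} = Ioc (hp.pos 0 x) m := by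
    ext k
    simp only [mem_filter, mem_Icc, mem_Ioc]
    omega
  simp only [rises_eq hx]
  rw [← card_eq_sum_card_fiberwise, hA.isInitial.card_filter (hp.pos 0 x < ·) hA.le, hIoc,
    Nat.card_Ioc]
  exact fun y hy ↦ hA.gate_mem x hx y (mem_filter.mp hy).1 (mem_filter.mp hy).2

lemma IsCentral.sum_falls (hA : hp.IsCentral m A) (hx : x ∈ A) :
    ∑ g ∈ Ioo m (2 * m), hp.falls A g x = hp.pos 0 x - 1 := by
  have hle := (hA.isInitial x).mp hx
  have hIco : {k ∈ Icc 1 m | k < hp.pos 0 x} = Ico 1 (hp.pos 0 x) := by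
    ext k
    simp only [mem_filter, mem_Icc, mem_Ico]
    omega
  simp only [falls_eq hx]
  rw [← card_eq_sum_card_fiberwise, hA.isInitial.card_filter (· < hp.pos 0 x) hA.le, hIco,
    Nat.card_Ico]
  exact fun y hy ↦ hA.gate_mem y (mem_filter.mp hy).1 x hx (mem_filter.mp hy).2

/-- An element with initial position `p` is tight if it rises once more than it falls at each of the
gates `m + p, …, 2 * m - p` and does not fall at the outer gates; this is the equality case of
`IsInitial.rises_le_falls_add_one`, summed over the gates. -/
def IsTight (hp : HalfPeriod n) (m : ℕ) (A : Finset (Fin n)) (x : Fin n) : Prop :=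
  (∀ g ∈ Icc (m + hp.pos 0 x) (2 * m - hp.pos 0 x), hp.rises A g x = hp.falls A g x + 1) ∧
    ∀ g ∈ Ioo m (2 * m) \ Icc (m + hp.pos 0 x) (2 * m - hp.pos 0 x), hp.falls A g x = 0

lemma IsCentral.isTight (hA : hp.IsCentral m A) (hx : x ∈ A) (hpos : 2 * hp.pos 0 x ≤ m + 1)
    (houter : ∀ g ∈ Ioo m (2 * m) \ Icc (m + hp.pos 0 x) (2 * m - hp.pos 0 x),
      hp.rises A g x = 0) : hp.IsTight m A x := by
  have hmem := hp.pos_mem 0 (Nat.zero_le _) x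
  have hsub : Icc (m + hp.pos 0 x) (2 * m - hp.pos 0 x) ⊆ Ioo m (2 * m) := by
    intro g hg
    simp only [mem_Icc, mem_Ioo] at *
    omega
  have hrises := sum_sdiff (f := fun g ↦ hp.rises A g x) hsub
  have hfalls := sum_sdiff (f := fun g ↦ hp.falls A g x) hsub
  have hle : ∀ g ∈ Icc (m + hp.pos 0 x) (2 * m - hp.pos 0 x),
      hp.rises A g x ≤ hp.falls A g x + 1 :=
    fun g _ ↦ hA.isInitial.rises_le_falls_add_one hx
  have hsum := sum_le_sum hle
  rw [sum_add_distrib, sum_const, Nat.card_Icc, smul_eq_mul, mul_one] at hsum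
  rw [sum_eq_zero houter, hA.sum_rises hx] at hrises
  rw [hA.sum_falls hx] at hfalls
  refine ⟨(sum_eq_sum_iff_of_le hle).mp ?_, sum_eq_zero_iff.mp ?_⟩
  · rw [sum_add_distrib, sum_const, Nat.card_Icc, smul_eq_mul, mul_one]
    omega
  · omega

lemma IsCentral.card_swapsIn_eq (hA : hp.IsCentral m A) (hg : g ∈ Icc (m + s) (2 * m - s))
    (htight : ∀ x ∈ A, hp.pos 0 x ≤ s → hp.IsTight m A x) :
    #(hp.swapsIn A g) = s + ∑ x ∈ A with hp.pos 0 x ≤ s, hp.falls A g x +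
      ∑ x ∈ A with ¬ hp.pos 0 x ≤ s, hp.rises A g x := by
  have hcard : #{x ∈ A | hp.pos 0 x ≤ s} = s := by
    have hIcc : {k ∈ Icc 1 m | k ≤ s} = Icc 1 s := by
      ext k
      simp only [mem_filter, mem_Icc] at *
      omega
    rw [hA.isInitial.card_filter (· ≤ s) hA.le, hIcc, Nat.card_Icc, Nat.add_sub_cancel]
  have hlow : ∑ x ∈ A with hp.pos 0 x ≤ s, hp.rises A g x =
      s + ∑ x ∈ A with hp.pos 0 x ≤ s, hp.falls A g x := by
    have htight' : ∀ x ∈ {x ∈ A | hp.pos 0 x ≤ s}, hp.rises A g x = hp.falls A g x + 1 := by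
      intro x hx
      rw [mem_filter] at hx
      refine (htight x hx.1 hx.2).1 g ?_
      rw [mem_Icc] at *
      omega
    rw [sum_congr rfl htight',
      sum_add_distrib, sum_const, hcard, smul_eq_mul, mul_one, add_comm]
  rw [card_swapsIn_eq_sum_rises, ← sum_filter_add_sum_filter_not A (hp.pos 0 · ≤ s), hlow]

lemma IsCentral.eq_zero_of_card_swapsIn_eq (hA : hp.IsCentral m A)
    (hg : g ∈ Icc (m + s) (2 * m - s)) (htight : ∀ x ∈ A, hp.pos 0 x ≤ s → hp.IsTight m A x)
    (hcard : #(hp.swapsIn A g) = s) (hx : x ∈ A) :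
    (hp.pos 0 x ≤ s → hp.falls A g x = 0) ∧ (s < hp.pos 0 x → hp.rises A g x = 0) := by
  have hsum := hA.card_swapsIn_eq hg htight
  have hfalls : ∑ x ∈ A with hp.pos 0 x ≤ s, hp.falls A g x = 0 := by omega
  have hrises : ∑ x ∈ A with ¬ hp.pos 0 x ≤ s, hp.rises A g x = 0 := by omega
  exact ⟨fun hle ↦ sum_eq_zero_iff.mp hfalls x (mem_filter.mpr ⟨hx, hle⟩),
    fun hlt ↦ sum_eq_zero_iff.mp hrises x (mem_filter.mpr ⟨hx, hlt.not_ge⟩)⟩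

/-- For all `s < k`, there are only `2 * s` transpositions within `A` at the gates `m + s` and
`2 * m - s` together; `IsCentral.two_mul_le_card_swapsIn_add` shows that this is the minimum. -/
def HasMinimalRings (hp : HalfPeriod n) (m : ℕ) (A : Finset (Fin n)) (k : ℕ) : Prop :=
  ∀ s, 1 ≤ s → s < k → #(hp.swapsIn A (m + s)) + #(hp.swapsIn A (2 * m - s)) = 2 * s

lemma HasMinimalRings.mono (h : hp.HasMinimalRings m A k) (hsk : s ≤ k) :
    hp.HasMinimalRings m A s :=
  fun i hi his ↦ h i hi (his.trans_le hsk)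

lemma IsCentral.exists_card_swapsIn_eq (hA : hp.IsCentral m A) (hk : 2 * k ≤ m + 1)
    (hring : hp.HasMinimalRings m A k) (htight : ∀ x ∈ A, hp.pos 0 x < k → hp.IsTight m A x)
    (hg : g ∈ Ioo m (2 * m) \ Icc (m + k) (2 * m - k)) :
    ∃ s < k, (g = m + s ∨ g = 2 * m - s) ∧ g ∈ Icc (m + s) (2 * m - s) ∧
      #(hp.swapsIn A g) = s := by
  obtain ⟨s, hs₁, hsk, hgs⟩ : ∃ s, 1 ≤ s ∧ s < k ∧ (g = m + s ∨ g = 2 * m - s) := by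
    simp only [mem_sdiff, mem_Ioo, mem_Icc] at hg
    by_cases hgk : g < m + k
    · exact ⟨g - m, by omega, by omega, by omega⟩
    · exact ⟨2 * m - g, by omega, by omega, by omega⟩
  have hleft : m + s ∈ Icc (m + s) (2 * m - s) := mem_Icc.mpr ⟨le_rfl, by omega⟩
  have hright : 2 * m - s ∈ Icc (m + s) (2 * m - s) := mem_Icc.mpr ⟨by omega, le_rfl⟩
  have htight' : ∀ x ∈ A, hp.pos 0 x ≤ s → hp.IsTight m A x :=
    fun x hx hxs ↦ htight x hx (hxs.trans_lt hsk)
  have := hring s hs₁ hsk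
  have := hA.card_swapsIn_eq hleft htight'
  have := hA.card_swapsIn_eq hright htight'
  rcases hgs with rfl | rfl
  · exact ⟨s, hsk, Or.inl rfl, hleft, by omega⟩
  · exact ⟨s, hsk, Or.inr rfl, hright, by omega⟩

lemma IsCentral.isTight_of_hasMinimalRings (hA : hp.IsCentral m A) (hk : 2 * k ≤ m + 1)
    (hring : hp.HasMinimalRings m A k) : ∀ x ∈ A, hp.pos 0 x ≤ k → hp.IsTight m A x := by
  induction k with
  | zero =>
    intro x _ hxk
    have := hp.pos_mem 0 (Nat.zero_le _) x
    omega
  | succ k ih =>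
    have htight := ih (by omega) (hring.mono k.le_succ)
    intro x hx hxk
    rcases hxk.lt_or_eq with hlt | hxk
    · exact htight x hx (Nat.le_of_lt_succ hlt)
    refine hA.isTight hx (by omega) fun g hg ↦ ?_
    rw [hxk] at hg
    have htight' : ∀ x ∈ A, hp.pos 0 x < k + 1 → hp.IsTight m A x :=
      fun y hy hyk ↦ htight y hy (Nat.le_of_lt_succ hyk)
    obtain ⟨s, hsk, -, hgs, hcard⟩ := hA.exists_card_swapsIn_eq hk hring htight' hg
    refine (hA.eq_zero_of_card_swapsIn_eq hgs (fun y hy hys ↦ ?_) hcard hx).2 (by omega)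
    exact htight' y hy (hys.trans_lt hsk)

lemma IsCentral.two_mul_le_card_swapsIn_add (hA : hp.IsCentral m A) (hk : 2 * k ≤ m)
    (hring : hp.HasMinimalRings m A k) :
    2 * k ≤ #(hp.swapsIn A (m + k)) + #(hp.swapsIn A (2 * m - k)) := by
  have htight := hA.isTight_of_hasMinimalRings (by omega) hring
  have := hA.card_swapsIn_eq (g := m + k) (mem_Icc.mpr ⟨le_rfl, by omega⟩) htight
  have := hA.card_swapsIn_eq (g := 2 * m - k) (mem_Icc.mpr ⟨by omega, le_rfl⟩) htight
  omega

lemma IsCentral.falls_eq_zero (hA : hp.IsCentral m A) (hk : 2 * k ≤ m + 1)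
    (hring : hp.HasMinimalRings m A k) (hx : x ∈ A) (hxk : hp.pos 0 x ≤ k)
    (hg : g ∈ Ioo m (2 * m) \ Icc (m + k) (2 * m - k)) : hp.falls A g x = 0 := by
  have htight := hA.isTight_of_hasMinimalRings hk hring
  obtain ⟨s, hsk, hg', hgs, hcard⟩ :=
    hA.exists_card_swapsIn_eq hk hring (fun x hx hxk ↦ htight x hx hxk.le) hg
  rcases le_or_gt (hp.pos 0 x) s with hxs | hsx
  · exact (hA.eq_zero_of_card_swapsIn_eq hgs
      (fun y hy hys ↦ htight y hy (hys.trans hsk.le)) hcard hx).1 hxs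
  · refine (htight x hx hxk).2 g (mem_sdiff.mpr ⟨(mem_sdiff.mp hg).1, fun hmem ↦ ?_⟩)
    rw [mem_Icc] at hmem
    omega

end CentralClass

section FirstElement

variable {hp : HalfPeriod n} {A : Finset (Fin n)} {m g w s t : ℕ} {x y z : Fin n}

lemma time_lt_of_time_lt_time (hzx : hp.pos 0 z < hp.pos 0 x) (hxy : hp.pos 0 x < hp.pos 0 y)
    (h : hp.time z y < hp.time z x) : hp.time x y < hp.time z y := by
  have hzy := hzx.trans hxy
  have ht := (time_lt_steps hzy).le
  have hpos := (pos_lt_iff_le_time hzx ht).mpr h.le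
  have hne := (hp.pos_inj _ ht).ne (ne_of_apply_ne _ hxy.ne)
  obtain ⟨h₁, h₂, -, -⟩ := transposes_time hzy
  exact (pos_gt_iff_time_lt hxy ht).mp (by omega)

lemma lt_time_of_time_lt_time (hzx : hp.pos 0 z < hp.pos 0 x) (hxy : hp.pos 0 x < hp.pos 0 y)
    (h : hp.time z x < hp.time z y) : hp.time z y < hp.time x y := by
  have hzy := hzx.trans hxy
  have ht : hp.time z y + 1 ≤ steps n := time_lt_steps hzy
  have hpos := (pos_gt_iff_time_lt hzx ht).mpr (Nat.lt_succ_of_lt h)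
  have hne := (hp.pos_inj _ ht).ne (ne_of_apply_ne _ hxy.ne)
  obtain ⟨-, -, h₁, h₂⟩ := transposes_time hzy
  exact (pos_lt_iff_le_time hxy ht).mp (by omega)

lemma pos_mono_of_first (hz : hp.pos 0 z = 1) (hst : s ≤ t) (ht : t ≤ steps n) :
    hp.pos s z ≤ hp.pos t z := by
  induction t, hst using Nat.le_induction with
  | base => rfl
  | succ t _ ih =>
    refine (ih (Nat.le_of_succ_le ht)).trans ?_
    obtain ⟨g, x, y, h, hfix⟩ := hp.exists_transposes ht
    have hlt := (h.lt_and_time_eq ht).1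
    have hmem := hp.pos_mem 0 (Nat.zero_le _) x
    have := hfix z
    grind [Transposes]

lemma exists_time_lt_iff_gate_lt (hz : hp.pos 0 z = 1) (hw : 1 ≤ w) :
    ∃ S ≤ steps n, ∀ y, hp.pos 0 z < hp.pos 0 y → (hp.time z y < S ↔ hp.gate z y < w) := by
  set S := Nat.findGreatest (fun t ↦ hp.pos t z ≤ w) (steps n)
  have hSw : hp.pos S z ≤ w :=
    Nat.findGreatest_spec (P := fun t ↦ hp.pos t z ≤ w) (Nat.zero_le _) (hz.trans_le hw)
  have hSn : S ≤ steps n := Nat.findGreatest_le _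
  refine ⟨S, hSn, fun y hzy ↦ ?_⟩
  have hsucc := (transposes_time hzy).pos_succ_riser
  constructor <;> intro h
  · have := pos_mono_of_first hz (show hp.time z y + 1 ≤ S from h) hSn
    omega
  · have hle : hp.pos (hp.time z y + 1) z ≤ w := by omega
    exact Nat.le_findGreatest (P := fun t ↦ hp.pos t z ≤ w) (time_lt_steps hzy) hle

/-- The elements of `A` past which `z` rises below gate `w`. -/
def early (hp : HalfPeriod n) (A : Finset (Fin n)) (z : Fin n) (w : ℕ) : Finset (Fin n) :=
  {x ∈ A | hp.pos 0 z < hp.pos 0 x ∧ hp.gate z x < w}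

/-- The elements of `A` past which `z` rises at gate `w` or above. -/
def late (hp : HalfPeriod n) (A : Finset (Fin n)) (z : Fin n) (w : ℕ) : Finset (Fin n) :=
  {x ∈ A | hp.pos 0 z < hp.pos 0 x ∧ w ≤ hp.gate z x}

lemma card_late_early_le (hA : hp.IsInitial 0 m A) (hz : hp.pos 0 z = 1) (hw : 1 ≤ w) :
    #{p ∈ hp.swapsIn A g | p.1 ∈ hp.late A z w ∧ p.2 ∈ hp.early A z w} ≤
      #{x ∈ hp.late A z w | hp.pos 0 x < m} := by
  obtain ⟨S, hS, htime⟩ := exists_time_lt_iff_gate_lt hz hw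
  set Q := {x ∈ hp.late A z w | hp.pos 0 x < m} with hQ
  have hinflow : {p ∈ hp.swaps g 0 S | p.1 ∉ Q ∧ p.2 ∈ Q} = ∅ := by
    refine filter_eq_empty_iff.mpr ?_
    rintro ⟨x, y⟩ hmem ⟨hx, hy⟩
    simp only [hQ, late, mem_filter, mem_swaps] at hx hy hmem
    have hxA : x ∈ A := (hA x).mpr (by omega)
    have := hp.pos_mem 0 (Nat.zero_le _) x
    have hzy := htime y hy.1.2.1
    by_cases hxz : x = z
    · subst hxz
      omega
    · have hpos := (hp.pos_inj 0 (Nat.zero_le _)).ne hxz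
      have hzx : hp.pos 0 z < hp.pos 0 x := by omega
      have := htime x hzx
      have hgate : hp.gate z x < w := by grind
      have := lt_time_of_time_lt_time hzx hmem.1 (by omega)
      omega
  have hflow := hp.card_outflow_le (g := g) (Nat.zero_le _) hS Q
  rw [hinflow, card_empty, add_zero] at hflow
  refine (card_le_card fun p hmem ↦ ?_).trans hflow
  simp only [hQ, late, early, mem_filter, mem_swapsIn, mem_swaps] at *
  have := time_lt_of_time_lt_time (hp := hp) (z := z) (x := p.1) (y := p.2)
  have := (hA p.2).mp hmem.1.2.2.2
  have := htime p.1
  have := htime p.2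
  grind

lemma card_early_late_le (hA : hp.IsInitial 0 m A) (hz : hp.pos 0 z = 1) (hw : 1 ≤ w) :
    #{p ∈ hp.swapsIn A g | p.1 ∈ hp.early A z w ∧ p.2 ∈ hp.late A z w} ≤
      #{x ∈ hp.early A z w | hp.pos 0 x < m} := by
  obtain ⟨S, hS, htime⟩ := exists_time_lt_iff_gate_lt hz hw
  set Q := {x ∈ hp.early A z w | hp.pos 0 x < m} with hQ
  have hinflow : {p ∈ hp.swaps g S (steps n) | p.1 ∉ Q ∧ p.2 ∈ Q} = ∅ := by
    refine filter_eq_empty_iff.mpr ?_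
    rintro ⟨x, y⟩ hmem ⟨hx, hy⟩
    simp only [hQ, early, mem_filter, mem_swaps] at hx hy hmem
    have hxA : x ∈ A := (hA x).mpr (by omega)
    have := hp.pos_mem 0 (Nat.zero_le _) x
    have hzy := htime y hy.1.2.1
    by_cases hxz : x = z
    · subst hxz
      omega
    · have hpos := (hp.pos_inj 0 (Nat.zero_le _)).ne hxz
      have hzx : hp.pos 0 z < hp.pos 0 x := by omega
      have := htime x hzx
      have hgate : w ≤ hp.gate z x := by grind
      have := time_lt_of_time_lt_time hzx hmem.1 (by omega)
      omega
  have hflow := hp.card_outflow_le (g := g) hS le_rfl Q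
  rw [hinflow, card_empty, add_zero] at hflow
  refine (card_le_card fun p hmem ↦ ?_).trans hflow
  simp only [hQ, late, early, mem_filter, mem_swapsIn, mem_swaps] at *
  have := lt_time_of_time_lt_time (hp := hp) (z := z) (x := p.1) (y := p.2)
  have := time_lt_steps (hp := hp) (x := p.1) (y := p.2)
  have := (hA p.2).mp hmem.1.2.2.2
  have := htime p.1
  have := htime p.2
  grind

end FirstElement

section CentralBound

variable {hp : HalfPeriod n} {A : Finset (Fin n)} {m g k q r w : ℕ} {x z : Fin n}

lemma card_swapsIn_le (hp : HalfPeriod n) (A : Finset (Fin n)) (g : ℕ) :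
    #(hp.swapsIn A g) ≤ (#A).choose 2 := by
  rw [← card_filter_lt_product_self (hp.pos_inj 0 (Nat.zero_le _)).injOn]
  refine card_le_card fun p hmem ↦ ?_
  rw [mem_swapsIn] at hmem
  exact mem_filter.mpr ⟨mem_product.mpr hmem.2.2, hmem.1⟩

lemma IsInitial.rises_le_one (hA : hp.IsInitial 0 m A) (hzA : z ∈ A) (hz : hp.pos 0 z = 1) :
    hp.rises A g z ≤ 1 := by
  have hfalls : hp.falls A g z = 0 := by
    refine card_eq_zero.mpr (filter_eq_empty_iff.mpr fun p hmem hpz ↦ ?_)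
    have hlt := (mem_swapsIn.mp hmem).1
    have := hp.pos_mem 0 (Nat.zero_le _) p.1
    rw [hpz] at hlt
    omega
  simpa only [hfalls] using hA.rises_le_falls_add_one (g := g) hzA

lemma IsInitial.gate_injOn (hA : hp.IsInitial 0 m A) (hzA : z ∈ A) (hz : hp.pos 0 z = 1) :
    Set.InjOn (hp.gate z) {x ∈ A | hp.pos 0 z < hp.pos 0 x} := by
  intro x hx y hy hxy
  have hrises := hA.rises_le_one (g := hp.gate z y) hzA hz
  rw [rises_eq hzA, card_le_one] at hrises
  exact hrises x (by simpa using ⟨hx, hxy⟩) y (by simpa using hy)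

lemma IsCentral.card_early_le (hA : hp.IsCentral m A) (hzA : z ∈ A) (hz : hp.pos 0 z = 1) :
    #(hp.early A z w) ≤ w - m - 1 := by
  rw [← Nat.card_Ioo]
  refine card_le_card_of_injOn (hp.gate z) (fun x hx ↦ ?_) fun x hx y hy ↦ ?_
  · simp only [early, coe_filter, Set.mem_ofPred_eq] at hx
    have := mem_Ioo.mp (hA.gate_mem z hzA x hx.1 hx.2.1)
    simp only [coe_Ioo, Set.mem_Ioo]
    omega
  · simp only [early, coe_filter, Set.mem_ofPred_eq] at hx hy
    exact hA.isInitial.gate_injOn hzA hz ⟨hx.1, hx.2.1⟩ ⟨hy.1, hy.2.1⟩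

lemma IsCentral.card_late_le (hA : hp.IsCentral m A) (hzA : z ∈ A) (hz : hp.pos 0 z = 1) :
    #(hp.late A z w) ≤ 2 * m - w := by
  rw [← Nat.card_Ico]
  refine card_le_card_of_injOn (hp.gate z) (fun x hx ↦ ?_) fun x hx y hy ↦ ?_
  · simp only [late, coe_filter, Set.mem_ofPred_eq] at hx
    have := mem_Ioo.mp (hA.gate_mem z hzA x hx.1 hx.2.1)
    simp only [coe_Ico, Set.mem_Ico]
    omega
  · simp only [late, coe_filter, Set.mem_ofPred_eq] at hx hy
    exact hA.isInitial.gate_injOn hzA hz ⟨hx.1, hx.2.1⟩ ⟨hy.1, hy.2.1⟩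

lemma IsCentral.gate_mem_Icc (hA : hp.IsCentral m A) (hk : 2 * k ≤ m + 1)
    (hring : hp.HasMinimalRings m A k) (hzA : z ∈ A) (hx : x ∈ A)
    (hzx : hp.pos 0 z < hp.pos 0 x) (hxk : hp.pos 0 x ≤ k) :
    hp.gate z x ∈ Icc (m + k) (2 * m - k) := by
  by_contra hgate
  have hfalls :=
    hA.falls_eq_zero hk hring hx hxk (mem_sdiff.mpr ⟨hA.gate_mem z hzA x hx hzx, hgate⟩)
  rw [falls_eq hx, card_eq_zero, filter_eq_empty_iff] at hfalls
  exact hfalls (mem_filter.mpr ⟨hzA, hzx⟩) rfl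

lemma IsCentral.image_gate_eq (hA : hp.IsCentral m A) (hm : m = 2 * r + q + 1) (hqr : q ≤ r)
    (hring : hp.HasMinimalRings m A (r + 1)) (hzA : z ∈ A) (hz : hp.pos 0 z = 1) :
    {x ∈ A | 2 ≤ hp.pos 0 x ∧ hp.pos 0 x ≤ q + 1}.image (hp.gate z) =
      Icc (m + (r + 1)) (2 * m - (r + 1)) := by
  have hcard : #{x ∈ A | 2 ≤ hp.pos 0 x ∧ hp.pos 0 x ≤ q + 1} = q := by
    have hIcc : {i ∈ Icc 1 m | 2 ≤ i ∧ i ≤ q + 1} = Icc 2 (q + 1) := by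
      ext i
      simp only [mem_filter, mem_Icc]
      omega
    rw [hA.isInitial.card_filter (fun i ↦ 2 ≤ i ∧ i ≤ q + 1) hA.le, hIcc, Nat.card_Icc]
    omega
  have hinj : Set.InjOn (hp.gate z)
      ({x ∈ A | 2 ≤ hp.pos 0 x ∧ hp.pos 0 x ≤ q + 1} : Finset (Fin n)) := by
    refine (hA.isInitial.gate_injOn hzA hz).mono fun x hx ↦ ?_
    obtain ⟨hx, hpos⟩ := mem_filter.mp hx
    exact ⟨hx, by omega⟩
  refine eq_of_subset_of_card_le (fun i hi ↦ ?_) ?_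
  · obtain ⟨x, hx, rfl⟩ := mem_image.mp hi
    obtain ⟨hx, hpos⟩ := mem_filter.mp hx
    exact hA.gate_mem_Icc (by omega) hring hzA hx (by omega) (by omega)
  · rw [card_image_of_injOn hinj, hcard, Nat.card_Icc]
    omega

lemma IsCentral.mem_early_or_mem_late (hA : hp.IsCentral m A) (hm : m = 2 * r + q + 1)
    (hqr : q ≤ r) (hring : hp.HasMinimalRings m A (r + 1)) (hzA : z ∈ A) (hz : hp.pos 0 z = 1)
    (hx : x ∈ A) (hqx : q + 1 < hp.pos 0 x) :
    x ∈ hp.early A z (m + r + 1) ∨ x ∈ hp.late A z (2 * m - r) := by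
  have hzx : hp.pos 0 z < hp.pos 0 x := by omega
  have hgate : hp.gate z x ∉ Icc (m + (r + 1)) (2 * m - (r + 1)) := by
    rw [← hA.image_gate_eq hm hqr hring hzA hz, mem_image]
    rintro ⟨y, hy, hyx⟩
    obtain ⟨hy, hpos⟩ := mem_filter.mp hy
    obtain rfl := hA.isInitial.gate_injOn hzA hz ⟨hy, by omega⟩ ⟨hx, hzx⟩ hyx
    omega
  simp only [mem_Icc] at hgate
  simp only [early, late, mem_filter, hx, hzx, true_and]
  omega

lemma IsCentral.card_early_add_card_late_lt (hA : hp.IsCentral m A) (hm : m = 2 * r + q + 1)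
    (hqr : q ≤ r) (hr : 0 < r) (hring : hp.HasMinimalRings m A (r + 1)) (hzA : z ∈ A)
    (hz : hp.pos 0 z = 1) :
    #{x ∈ hp.early A z (m + r + 1) | hp.pos 0 x < m} +
      #{x ∈ hp.late A z (2 * m - r) | hp.pos 0 x < m} < 2 * r := by
  obtain ⟨u, hu⟩ := hp.exists_pos_eq (Nat.zero_le _) (mem_Icc.mpr ⟨by omega, hA.le⟩ : m ∈ Icc 1 n)
  have huA : u ∈ A := (hA.isInitial u).mpr hu.le
  have hearly := hA.card_early_le (w := m + r + 1) hzA hz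
  have hlate := hA.card_late_le (w := 2 * m - r) hzA hz
  have hearly' := card_filter_le (hp.early A z (m + r + 1)) (hp.pos 0 · < m)
  have hlate' := card_filter_le (hp.late A z (2 * m - r)) (hp.pos 0 · < m)
  rcases hA.mem_early_or_mem_late hm hqr hring hzA hz huA (by omega) with h | h
  · have := card_lt_card (filter_ssubset (p := (hp.pos 0 · < m)).mpr ⟨u, h, hu.not_lt⟩)
    omega
  · have := card_lt_card (filter_ssubset (p := (hp.pos 0 · < m)).mpr ⟨u, h, hu.not_lt⟩)
    omega

lemma IsCentral.card_filter_lt_pos_lt (hA : hp.IsCentral m A) (hm : m = 2 * r + q + 1)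
    (hqr : q ≤ r) (hr : 0 < r) (hring : hp.HasMinimalRings m A (r + 1)) :
    #{p ∈ hp.swapsIn A g | q + 1 < hp.pos 0 p.1} < 2 * (r + 1).choose 2 := by
  obtain ⟨z, hz⟩ := hp.exists_pos_eq (k := 1) (Nat.zero_le _)
    (mem_Icc.mpr ⟨le_rfl, by have := hA.le; omega⟩)
  have hzA : z ∈ A := (hA.isInitial z).mpr (by omega)
  set E := hp.early A z (m + r + 1) with hE
  set L := hp.late A z (2 * m - r) with hL
  have hcover : {p ∈ hp.swapsIn A g | q + 1 < hp.pos 0 p.1} ⊆ (hp.swapsIn E g ∪ hp.swapsIn L g) ∪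
      ({p ∈ hp.swapsIn A g | p.1 ∈ E ∧ p.2 ∈ hp.late A z (m + r + 1)} ∪
        {p ∈ hp.swapsIn A g | p.1 ∈ L ∧ p.2 ∈ hp.early A z (2 * m - r)}) := by
    intro p hmem
    obtain ⟨hmem, hqp⟩ := mem_filter.mp hmem
    have hmem' := mem_swapsIn.mp hmem
    have h₁ := hA.mem_early_or_mem_late hm hqr hring hzA hz hmem'.2.2.1 hqp
    have h₂ := hA.mem_early_or_mem_late hm hqr hring hzA hz hmem'.2.2.2 (hqp.trans hmem'.1)
    simp only [mem_union, mem_filter, mem_swapsIn, hE, hL, early, late] at *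
    grind
  have hchoose {Q : Finset (Fin n)} (hQ : #Q ≤ r) : #(hp.swapsIn Q g) ≤ r.choose 2 :=
    (hp.card_swapsIn_le Q g).trans (Nat.choose_le_choose 2 hQ)
  have hEE : #(hp.swapsIn E g) ≤ r.choose 2 := hchoose ((hA.card_early_le hzA hz).trans (by omega))
  have hLL : #(hp.swapsIn L g) ≤ r.choose 2 := hchoose ((hA.card_late_le hzA hz).trans (by omega))
  have hEL : #{p ∈ hp.swapsIn A g | p.1 ∈ E ∧ p.2 ∈ hp.late A z (m + r + 1)} ≤
    #{x ∈ E | hp.pos 0 x < m} := card_early_late_le hA.isInitial hz (by omega)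
  have hLE : #{p ∈ hp.swapsIn A g | p.1 ∈ L ∧ p.2 ∈ hp.early A z (2 * m - r)} ≤
    #{x ∈ L | hp.pos 0 x < m} := card_late_early_le hA.isInitial hz (by omega)
  have hcross : #{x ∈ E | hp.pos 0 x < m} + #{x ∈ L | hp.pos 0 x < m} < 2 * r :=
    hA.card_early_add_card_late_lt hm hqr hr hring hzA hz
  have hpascal : (r + 1).choose 2 = r + r.choose 2 := by
    rw [Nat.choose_succ_succ' r 1, Nat.choose_one_right]
  grw [hcover, card_union_le, card_union_le, card_union_le]
  omega

lemma IsInitial.card_filter_pos_le (hA : hp.IsInitial 0 m A) (hmn : m ≤ n) (hqm : q < m) :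
    #{p ∈ hp.swapsIn A g | hp.pos 0 p.1 ≤ q + 1} ≤ (q + 1).choose 2 + 2 := by
  obtain ⟨z, hz⟩ := hp.exists_pos_eq (k := 1) (Nat.zero_le _) (mem_Icc.mpr ⟨le_rfl, by omega⟩)
  have hzA : z ∈ A := (hA z).mpr (by omega)
  set Q := {x ∈ A | hp.pos 0 x ≤ q + 1} with hQ
  have hcardQ : #Q = q + 1 := by
    have hIcc : {i ∈ Icc 1 m | i ≤ q + 1} = Icc 1 (q + 1) := by
      ext i
      simp only [mem_filter, mem_Icc]
      omega
    rw [hA.card_filter (· ≤ q + 1) hmn, hIcc, Nat.card_Icc, Nat.add_sub_cancel]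
  have hcover : {p ∈ hp.swapsIn A g | hp.pos 0 p.1 ≤ q + 1} ⊆
      {p ∈ hp.swapsIn A g | p.1 = z} ∪ (hp.swapsIn (Q.erase z) g ∪
        {p ∈ hp.swaps g 0 (steps n) | p.1 ∈ Q ∧ p.2 ∉ Q}) := by
    intro p hmem
    obtain ⟨hmem, hqp⟩ := mem_filter.mp hmem
    have hstep := (mem_filter.mp hmem).1
    have hpz : p.2 ≠ z := by
      have := hp.pos_mem 0 (Nat.zero_le _) p.1
      have := (mem_swapsIn.mp hmem).1
      grind
    simp only [mem_union, mem_filter, mem_swapsIn, mem_erase, hQ] at *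
    grind
  have hinflow : {p ∈ hp.swaps g 0 (steps n) | p.1 ∉ Q ∧ p.2 ∈ Q} = ∅ := by
    refine filter_eq_empty_iff.mpr fun p hmem ↦ ?_
    simp only [mem_swaps, hQ, mem_filter, hA p.1] at *
    have := (hA p.2).mp
    grind
  have hflow := hp.card_outflow_le (g := g) (Nat.zero_le _) le_rfl Q
  rw [hinflow, card_empty, add_zero, hcardQ] at hflow
  have hrises : #{p ∈ hp.swapsIn A g | p.1 = z} ≤ 1 := hA.rises_le_one hzA hz
  have hchoose := hp.card_swapsIn_le (Q.erase z) g
  rw [card_erase_of_mem (mem_filter.mpr ⟨hzA, by omega⟩), hcardQ, Nat.add_sub_cancel] at hchoose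
  have hpascal : (q + 1).choose 2 = q + q.choose 2 := by
    rw [Nat.choose_succ_succ' q 1, Nat.choose_one_right]
  grw [hcover, card_union_le, card_union_le]
  omega

lemma IsCentral.card_swapsIn_le (hA : hp.IsCentral m A) (hm : m = 2 * r + q + 1)
    (hqr : q ≤ r) (hr : 0 < r) (hring : hp.HasMinimalRings m A (r + 1)) :
    #(hp.swapsIn A g) ≤ (q + 1).choose 2 + 2 * (r + 1).choose 2 + 1 := by
  have htop := hA.isInitial.card_filter_pos_le (g := g) (q := q) hA.le (by omega)
  have hbottom := hA.card_filter_lt_pos_lt (g := g) hm hqr hr hring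
  have hsplit := card_filter_add_card_filter_not (s := hp.swapsIn A g) (hp.pos 0 ·.1 ≤ q + 1)
  simp only [not_le] at hsplit
  omega

end CentralBound

section ThreeClasses

variable {hp : HalfPeriod n} {m k r q g T : ℕ}

lemma IsInitial.isCentral_rotate {A : Finset (Fin n)} (hn : n = 3 * m) (hT : T ≤ steps n)
    (hA : hp.IsInitial T m A) (hmono : ∀ g ∈ Icc 1 m, hp.mono A g = 0) :
    (hp.rotate T hT).IsCentral m A := by
  refine ⟨hA.rotate hT, by omega, fun x hx y hy hxy ↦ mem_Ioo.mpr ?_⟩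
  have htime := time_lt_steps hxy
  obtain ⟨hgate, hgate', -, -⟩ := transposes_time hxy
  have := (hp.rotate T hT).pos_mem _ htime.le x
  have := (hp.rotate T hT).pos_mem _ htime.le y
  have hxy_mem : (x, y) ∈ (hp.rotate T hT).swapsIn A ((hp.rotate T hT).gate x y) :=
    mem_swapsIn.mpr ⟨hxy, rfl, hx, hy⟩
  have hempty (g) (hg : g ∈ Icc 1 m) : (hp.rotate T hT).swapsIn A g = ∅ ∧
      (hp.rotate T hT).swapsIn A (n - g) = ∅ := by
    have hg' := mem_Icc.mp hg
    have := mono_eq_card_swapsIn_add (hp.rotate T hT) A (g := g) (by omega)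
    rw [hp.mono_rotate hT (by omega), hmono g hg] at this
    rw [← card_eq_zero, ← card_eq_zero]
    omega
  constructor <;> by_contra! hle
  · rw [(hempty _ (mem_Icc.mpr ⟨by omega, hle⟩)).1] at hxy_mem
    exact notMem_empty _ hxy_mem
  · have hsub : (hp.rotate T hT).gate x y = n - (n - (hp.rotate T hT).gate x y) := by omega
    rw [hsub, (hempty _ (mem_Icc.mpr ⟨by omega, by omega⟩)).2] at hxy_mem
    exact notMem_empty _ hxy_mem

lemma hasMinimalRings_rotate {A : Finset (Fin n)} (hn : n = 3 * m) (hT : T ≤ steps n)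
    (hk : 2 * k ≤ m + 1) (hmono : ∀ s, 1 ≤ s → s < k → hp.mono A (m + s) = 2 * s) :
    (hp.rotate T hT).HasMinimalRings m A k := by
  intro s hs hsk
  have hsub : n - (m + s) = 2 * m - s := by omega
  rw [← hsub, ← mono_eq_card_swapsIn_add _ _ (by omega), hp.mono_rotate hT (by omega),
    hmono s hs hsk]

lemma IsInitial.two_mul_sub_le_mono {A : Finset (Fin n)} (hn : n = 3 * m) (hT : T ≤ steps n)
    (hA : hp.IsInitial T m A) (hg : 2 * g < n)
    (hmono : ∀ i, 1 ≤ i → i < g → hp.mono A i = 2 * (i - m)) : 2 * (g - m) ≤ hp.mono A g := by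
  rcases le_or_gt g m with hgm | hmg
  · omega
  have hcentral := hA.isCentral_rotate hn hT fun i hi ↦ by
    rw [mem_Icc] at hi
    rw [hmono i hi.1 (by omega)]
    omega
  have hring : (hp.rotate T hT).HasMinimalRings m A (g - m) :=
    hasMinimalRings_rotate hn hT (by omega) fun s hs hsk ↦ by
      rw [hmono (m + s) (by omega) (by omega), Nat.add_sub_cancel_left]
  have hle := hcentral.two_mul_le_card_swapsIn_add (by omega) hring
  have hadd : m + (g - m) = g := by omega
  have hsub : 2 * m - (g - m) = n - g := by omega
  rwa [hadd, hsub, ← mono_eq_card_swapsIn_add _ _ hg, hp.mono_rotate hT (by omega)] at hle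

lemma IsInitial.mono_le {A : Finset (Fin n)} (hn : n = 3 * m) (hm : m = 2 * r + q + 1)
    (hqr : q ≤ r) (hT : T ≤ steps n) (hA : hp.IsInitial T m A) (hg : 2 * g = n)
    (hmono : ∀ i, 1 ≤ i → i ≤ m + r → hp.mono A i = 2 * (i - m)) :
    hp.mono A g ≤ (q + 1).choose 2 + 2 * (r + 1).choose 2 + 1 := by
  have hcentral := hA.isCentral_rotate hn hT fun i hi ↦ by
    rw [mem_Icc] at hi
    rw [hmono i hi.1 (by omega)]
    omega
  have hring : (hp.rotate T hT).HasMinimalRings m A (r + 1) :=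
    hasMinimalRings_rotate hn hT (by omega) fun s hs hsr ↦ by
      rw [hmono (m + s) (by omega) (by omega), Nat.add_sub_cancel_left]
  rw [← hp.mono_rotate hT (by omega), mono_eq_card_swapsIn _ _ hg]
  exact hcentral.card_swapsIn_le hm hqr (by omega) hring

lemma sum_Icc_three_mul_min_add (m k : ℕ) :
    ∑ g ∈ Icc 1 k, (3 * min m g + 6 * (g - m)) =
      3 * (k + 1).choose 2 + 3 * (k + 1 - m).choose 2 := by
  have hsucc (i : ℕ) : (i + 1).choose 2 = i + i.choose 2 := by
    rw [Nat.choose_succ_succ' i 1, Nat.choose_one_right]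
  induction k with
  | zero => cases m <;> simp
  | succ k ih =>
    rw [sum_Icc_succ_top (by omega), ih, hsucc (k + 1)]
    rcases le_or_gt m (k + 1) with hmk | hkm
    · rw [Nat.sub_add_comm hmk, hsucc (k + 1 - m)]
      omega
    · rw [Nat.sub_eq_zero_of_le (by omega : k + 1 + 1 ≤ m), Nat.sub_eq_zero_of_le hkm.le]
      omega

variable {A : Fin 3 → Finset (Fin n)}

lemma sum_sum_mono_le (hn : n = 3 * m) (hdisj : Pairwise fun i j ↦ Disjoint (A i) (A j))
    (hA : ∀ i, ∃ T ≤ steps n, hp.IsInitial T m (A i)) (hk : 2 * k < n)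
    (hN : hp.NLe k ≤ 3 * (k + 1).choose 2 + 3 * (k + 1 - m).choose 2) :
    ∑ g ∈ Icc 1 k, ∑ i, hp.mono (A i) g ≤ ∑ g ∈ Icc 1 k, 6 * (g - m) := by
  have hcritical : ∑ g ∈ Icc 1 k, (∑ i, hp.mono (A i) g + 3 * min m g) ≤ hp.NLe k := by
    rw [NLe_eq_sum_numCritical hp hk]
    refine sum_le_sum fun g hg ↦ ?_
    rw [mem_Icc] at hg
    exact sum_mono_add_le_numCritical hdisj hA (by omega) (by omega)
  have hsum := hcritical.trans hN
  rw [← sum_Icc_three_mul_min_add, sum_add_distrib, sum_add_distrib] at hsum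
  omega

lemma mono_eq_two_mul_sub (hn : n = 3 * m) (hdisj : Pairwise fun i j ↦ Disjoint (A i) (A j))
    (hA : ∀ i, ∃ T ≤ steps n, hp.IsInitial T m (A i)) (hk : 2 * k < n)
    (hN : ∀ i, 1 ≤ i → i ≤ k →
      hp.NLe i ≤ 3 * (i + 1).choose 2 + 3 * (i + 1 - m).choose 2)
    (hg : 1 ≤ g) (hgk : g ≤ k) (i : Fin 3) : hp.mono (A i) g = 2 * (g - m) := by
  induction g using Nat.strong_induction_on generalizing i with | _ g ih
  have hle := sum_sum_mono_le hn hdisj hA (by omega) (hN g hg hgk)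
  obtain ⟨g, rfl⟩ := Nat.exists_eq_add_of_le' hg
  have hbelow : ∑ j ∈ Icc 1 g, ∑ i, hp.mono (A i) j = ∑ j ∈ Icc 1 g, 6 * (j - m) := by
    refine sum_congr rfl fun j hj ↦ ?_
    rw [mem_Icc] at hj
    simp only [ih j (by omega) hj.1 (by omega), sum_const, card_univ, Fintype.card_fin,
      smul_eq_mul, ← mul_assoc, Nat.reduceMul]
  have hge (i : Fin 3) : 2 * (g + 1 - m) ≤ hp.mono (A i) (g + 1) := by
    obtain ⟨T, hT, hAT⟩ := hA i
    exact hAT.two_mul_sub_le_mono hn hT (by omega) fun j hj hjg ↦ ih j hjg hj (by omega) i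
  rw [sum_Icc_succ_top hg, sum_Icc_succ_top hg, hbelow, Fin.sum_univ_three] at hle
  have := hge 0
  have := hge 1
  have := hge 2
  fin_cases i <;> simp only [Fin.zero_eta, Fin.mk_one, Fin.reduceFinMk] <;> omega

end ThreeClasses

end HalfPeriod

namespace IsThreeDecompLabeling30

open HalfPeriod

variable {hp : HalfPeriod 30} {a b c : Fin 10 → Fin 30}

lemma injective (h : IsThreeDecompLabeling30 hp a b c) (i : Fin 3) :
    Function.Injective (![a, b, c] i) := by
  obtain ⟨ha, hbc, -⟩ := Sum.elim_injective.mp h.1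
  obtain ⟨hb, hc, -⟩ := Sum.elim_injective.mp hbc
  fin_cases i <;> assumption

lemma pairwise_disjoint (h : IsThreeDecompLabeling30 hp a b c) :
    Pairwise fun i j ↦ Disjoint (univ.image (![a, b, c] i)) (univ.image (![a, b, c] j)) := by
  obtain ⟨-, hbc, ha_ne⟩ := Sum.elim_injective.mp h.1
  obtain ⟨-, -, hb_ne⟩ := Sum.elim_injective.mp hbc
  have ne_b (i j) : a i ≠ b j := ha_ne i (Sum.inl j)
  have ne_c (i j) : a i ≠ c j := ha_ne i (Sum.inr j)
  intro i j hij
  simp only [disjoint_left, mem_image, mem_univ, true_and]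
  rintro _ ⟨k, rfl⟩ ⟨l, hl⟩
  fin_cases i <;> fin_cases j
  exacts [hij rfl, ne_b k l hl.symm, ne_c k l hl.symm, ne_b l k hl, hij rfl, hb_ne k l hl.symm,
    ne_c l k hl, hb_ne l k hl, hij rfl]

lemma exists_eq (h : IsThreeDecompLabeling30 hp a b c) (x : Fin 30) :
    ∃ i j, ![a, b, c] i j = x := by
  have hbij := (Fintype.bijective_iff_injective_and_card _).mpr ⟨h.1, rfl⟩
  obtain ⟨j | j | j, rfl⟩ := hbij.surjective x
  · exact ⟨0, j, rfl⟩
  · exact ⟨1, j, rfl⟩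
  · exact ⟨2, j, rfl⟩

lemma pos_a_lt_pos_b (h : IsThreeDecompLabeling30 hp a b c) (i j : Fin 10) :
    hp.pos 0 (a i) < hp.pos 0 (b j) := by
  rw [h.2.1, h.2.2.1]
  omega

lemma pos_b_lt_pos_c (h : IsThreeDecompLabeling30 hp a b c) (i j : Fin 10) :
    hp.pos 0 (b i) < hp.pos 0 (c j) := by
  rw [h.2.2.1, h.2.2.2.1]
  omega

lemma exists_lt_pos_of_b (h : IsThreeDecompLabeling30 hp a b c) :
    ∃ T ≤ steps 30, ∀ j k, hp.pos T (b j) < hp.pos T (a k) ∧ hp.pos T (b j) < hp.pos T (c k) := by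
  obtain ⟨p, hp_min⟩ := Finite.exists_min fun p : Fin 10 × Fin 10 ↦ hp.time (b p.1) (c p.2)
  have hbc := h.pos_b_lt_pos_c p.1 p.2
  have hT := time_lt_steps hbc
  refine ⟨_, hT.le, fun j k ↦ ⟨?_, ?_⟩⟩
  · have hab := h.pos_a_lt_pos_b k j
    have hs := time_lt_steps hab
    rw [pos_gt_iff_time_lt hab hT.le]
    obtain ⟨-, -, -, -, hABC, -⟩ := h
    refine hABC _ _ hs hT ⟨k, j, ?_⟩ ⟨p.2, b p.1, Or.inr ⟨_, rfl⟩, ?_⟩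
    · exact ((transposes_time hab).swapsAt_iff hs).mpr (Or.inl ⟨rfl, rfl⟩)
    · exact ((transposes_time hbc).swapsAt_iff hT).mpr (Or.inr ⟨rfl, rfl⟩)
  · exact (pos_lt_iff_le_time (h.pos_b_lt_pos_c j k) hT.le).mpr (hp_min (j, k))

lemma exists_pos_lt (h : IsThreeDecompLabeling30 hp a b c) (i : Fin 3) :
    ∃ T ≤ steps 30, ∀ i' ≠ i, ∀ j k, hp.pos T (![a, b, c] i j) < hp.pos T (![a, b, c] i' k) := by
  have hab := h.pos_a_lt_pos_b
  have hbc := h.pos_b_lt_pos_c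
  have hac (j k) : hp.pos 0 (a j) < hp.pos 0 (c k) := (hab j 0).trans (hbc 0 k)
  have hrev {x y} (hxy : hp.pos 0 x < hp.pos 0 y) : hp.pos (steps 30) y < hp.pos (steps 30) x :=
    (pos_gt_iff_time_lt hxy le_rfl).mpr (time_lt_steps hxy)
  fin_cases i
  · refine ⟨0, Nat.zero_le _, fun i' hi' j k ↦ ?_⟩
    fin_cases i'
    exacts [absurd rfl hi', hab j k, hac j k]
  · obtain ⟨T, hT, hbT⟩ := h.exists_lt_pos_of_b
    refine ⟨T, hT, fun i' hi' j k ↦ ?_⟩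
    fin_cases i'
    exacts [(hbT j k).1, absurd rfl hi', (hbT j k).2]
  · refine ⟨steps 30, le_rfl, fun i' hi' j k ↦ ?_⟩
    fin_cases i'
    exacts [hrev (hac k j), hrev (hbc k j), absurd rfl hi']

lemma exists_isInitial (h : IsThreeDecompLabeling30 hp a b c) (i : Fin 3) :
    ∃ T ≤ steps 30, hp.IsInitial T 10 (univ.image (![a, b, c] i)) := by
  obtain ⟨T, hT, hlt⟩ := h.exists_pos_lt i
  have hcard : #(univ.image (![a, b, c] i)) = 10 :=
    (card_image_of_injective _ (h.injective i)).trans (Finset.card_fin 10)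
  refine ⟨T, hT, isInitial_of_forall_lt hT hcard fun x hx y hy ↦ ?_⟩
  obtain ⟨j, -, rfl⟩ := mem_image.mp hx
  obtain ⟨i', k, rfl⟩ := h.exists_eq y
  refine hlt i' ?_ j k
  rintro rfl
  exact hy (mem_image_of_mem _ (mem_univ k))

end IsThreeDecompLabeling30

lemma N15Mono_eq_mono (hp : HalfPeriod 30) (x : Fin 10 → Fin 30) :
    N15Mono hp x = hp.mono (univ.image x) 15 := by
  rw [N15Mono, HalfPeriod.mono, ← Set.ncard_coe_finset]
  congr 1
  ext t
  simp only [Set.mem_ofPred_eq, HalfPeriod.Critical, Nat.reduceSub, or_self, mem_image,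
    mem_univ, true_and, exists_exists_eq_and, coe_filter, mem_range]

theorem N15_mono_le_19_general {n m r q g : ℕ} (hp : HalfPeriod n) (hn : n = 3 * m)
    (hm : m = 2 * r + q + 1) (hqr : q ≤ r) (hg : 2 * g = n) (A : Fin 3 → Finset (Fin n))
    (hdisj : Pairwise fun i j ↦ Disjoint (A i) (A j))
    (hA : ∀ i, ∃ T ≤ HalfPeriod.steps n, hp.IsInitial T m (A i))
    (hN : ∀ k, 1 ≤ k → k ≤ m + r →
      hp.NLe k ≤ 3 * (k + 1).choose 2 + 3 * (k + 1 - m).choose 2) (i : Fin 3) :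
    hp.mono (A i) g ≤ (q + 1).choose 2 + 2 * (r + 1).choose 2 + 1 := by
  obtain ⟨T, hT, hAT⟩ := hA i
  exact hAT.mono_le hn hm hqr hT hg fun j hj hjk ↦
    HalfPeriod.mono_eq_two_mul_sub hn hdisj hA (by omega) hN hj hjk i

/-- `N_15^{aa}(Π) ≤ 19`, `N_15^{bb}(Π) ≤ 19` and `N_15^{cc}(Π) ≤ 19`. -/
theorem N15_mono_le_19 (hp : HalfPeriod 30) (a b c : Fin 10 → Fin 30)
    (h3 : IsThreeDecompLabeling30 hp a b c)
    (hN1 : ∀ k : ℕ, 1 ≤ k → k ≤ 10 → hp.NLe k = 3 * Nat.choose (k + 1) 2)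
    (hN2 : ∀ k : ℕ, 11 ≤ k → k ≤ 13 →
      hp.NLe k = 3 * Nat.choose (k + 1) 2 + 3 * Nat.choose (k - 9) 2) :
    N15Mono hp a ≤ 19 ∧ N15Mono hp b ≤ 19 ∧ N15Mono hp c ≤ 19 := by
  have hN : ∀ k, 1 ≤ k → k ≤ 13 →
      hp.NLe k ≤ 3 * (k + 1).choose 2 + 3 * (k + 1 - 10).choose 2 := by
    intro k hk hk13
    rcases le_or_gt k 10 with hk10 | hk10
    · exact (hN1 k hk hk10).trans_le (Nat.le_add_right _ _)
    · exact (hN2 k hk10 hk13).le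
  have hle := N15_mono_le_19_general (r := 3) (q := 3) (g := 15) hp rfl rfl le_rfl rfl
    (fun i ↦ univ.image (![a, b, c] i)) h3.pairwise_disjoint h3.exists_isInitial hN
  simp only [N15Mono_eq_mono]
  exact ⟨hle 0, hle 1, hle 2⟩
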